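/- arXiv:1207.1961 — 3 statements merged into one kernel-verified Lean document; each statement's English description precedes it below -/
import Mathlib

section
/- Let G be a connected graph whose edge set is partitioned into a cycle C of length at least 4 and a connected graph G' such that G' has an oriented perfect path double cover and at least 2 vertices of C do not belong to G'. Then G has an oriented perfect path double cover. -/
/-- An oriented perfect path double cover: for each vertex `v`, a directed path
`P v` (a nonempty list of distinct vertices, consecutive ones adjacent) starting
at `v`, such that each vertex is the end of exactly one path, and each arc of the
symmetric orientation lies in exactly one path. -/
def HasOPPDC {V : Type*} (G : SimpleGraph V) : Prop :=
  ∃ P : V → List V,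
    (∀ v, P v ≠ [] ∧ (P v).Nodup ∧ (P v).Chain' G.Adj ∧ (P v).head? = some v) ∧
    (∀ w : V, ∃! v, (P v).getLast? = some w) ∧
    (∀ a b : V, G.Adj a b → ∃! v, (a, b) ∈ (P v).zip (P v).tail)

/-- The cycle graph on `ZMod n`: `v` adjacent to `v + 1`. -/
def cycleGraph (n : ℕ) : SimpleGraph (ZMod n) :=
  SimpleGraph.fromRel (fun a b => b = a + 1)

/-- The arcs traversed by a list of vertices. -/
def arcs {V : Type*} (l : List V) : List (V × V) := l.zip l.tail

section Arcs

variable {V : Type*}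

@[simp] lemma arcs_nil : arcs ([] : List V) = [] := rfl

@[simp] lemma arcs_singleton (a : V) : arcs [a] = [] := rfl

@[simp] lemma arcs_cons_cons (a b : V) (l : List V) :
    arcs (a :: b :: l) = (a, b) :: arcs (b :: l) := rfl

lemma arcs_append_cons (l₁ l₂ : List V) (x : V) :
    arcs (l₁ ++ x :: l₂) = arcs (l₁ ++ [x]) ++ arcs (x :: l₂) := by
  induction l₁ with
  | nil => simp
  | cons a l ih => cases l <;> simp_all

lemma mem_arcs_reverse (a b : V) (l : List V) : (a, b) ∈ arcs l.reverse ↔ (b, a) ∈ arcs l := by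
  induction l with
  | nil => simp
  | cons c l ih =>
    cases l with
    | nil => simp
    | cons d l =>
      have h : (c :: d :: l).reverse = l.reverse ++ d :: [c] := by simp
      rw [h, arcs_append_cons, ← List.reverse_cons]
      simp only [List.mem_append, ih, arcs_cons_cons, List.mem_cons, arcs_singleton,
        List.not_mem_nil, or_false, Prod.mk.injEq]
      tauto

lemma mem_of_mem_arcs {a b : V} {l : List V} (h : (a, b) ∈ arcs l) : a ∈ l ∧ b ∈ l :=
  ⟨(List.of_mem_zip h).1, List.mem_of_mem_tail (List.of_mem_zip h).2⟩

lemma fst_mem_of_mem_arcs_concat {a b x : V} {l : List V} (h : (a, b) ∈ arcs (l ++ [x])) :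
    a ∈ l := by
  induction l with
  | nil => simp at h
  | cons c l ih => cases l <;> simp_all; tauto

lemma exists_eq_append_of_mem_arcs {a b : V} {l : List V} (h : (a, b) ∈ arcs l) :
    ∃ l₁ l₂, l = l₁ ++ a :: b :: l₂ := by
  induction l with
  | nil => simp at h
  | cons c l ih =>
    cases l with
    | nil => simp at h
    | cons d l =>
      rcases List.mem_cons.1 h with h | h
      · exact ⟨[], l, by simp_all⟩
      · obtain ⟨l₁, l₂, e⟩ := ih h
        exact ⟨c :: l₁, l₂, by simp [e]⟩

lemma isChain_iff_arcs {R : V → V → Prop} {l : List V} :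
    l.IsChain R ↔ ∀ a b, (a, b) ∈ arcs l → R a b := by
  induction l with
  | nil => simp
  | cons c l ih =>
    cases l with
    | nil => simp
    | cons d l =>
      simp only [List.isChain_cons_cons, ih, arcs_cons_cons, List.mem_cons, Prod.mk.injEq]
      grind

lemma mem_arcs_map {W : Type*} (f : W → V) (hf : f.Injective) (a b : W) (l : List W) :
    (f a, f b) ∈ arcs (l.map f) ↔ (a, b) ∈ arcs l := by
  induction l with
  | nil => simp
  | cons c l ih => cases l <;> simp_all [hf.eq_iff]

lemma mem_arcs_map_range (f : ℕ → V) (n : ℕ) (a b : V) :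
    (a, b) ∈ arcs ((List.range (n + 1)).map f) ↔ ∃ j < n, a = f j ∧ b = f (j + 1) := by
  induction n with
  | zero => simp
  | succ n ih =>
    have h : (List.range (n + 1 + 1)).map f = (List.range n).map f ++ f n :: [f (n + 1)] := by
      simp [List.range_succ]
    have h' : (List.range (n + 1)).map f = (List.range n).map f ++ [f n] := by
      simp [List.range_succ]
    rw [h, arcs_append_cons, ← h', List.mem_append, ih]
    simp only [arcs_cons_cons, arcs_singleton, List.mem_singleton, Prod.mk.injEq]
    constructor
    · rintro (⟨j, hj, h⟩ | h)
      · exact ⟨j, by omega, h⟩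
      · exact ⟨n, by omega, h⟩
    · rintro ⟨j, hj, hab⟩
      rcases Nat.lt_succ_iff_lt_or_eq.1 hj with hj | rfl
      · exact .inl ⟨j, hj, hab⟩
      · exact .inr hab

lemma forall_mem_of_arcs {S : Set V} {c : V} {l : List V} (hc : c ∈ S)
    (h : ∀ a b, (a, b) ∈ arcs (c :: l) → a ∈ S → b ∈ S) : ∀ v ∈ c :: l, v ∈ S := by
  induction l generalizing c with
  | nil => simpa
  | cons d l ih =>
    have hd : d ∈ S := h c d (by simp) hc
    have := ih hd fun a b hab => h a b (by simp [hab])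
    simpa [hc] using this

lemma eq_singleton_of_head?_of_getLast? {u : V} {l : List V} (hd : l.head? = some u)
    (hl : l.getLast? = some u) (hnd : l.Nodup) : l = [u] := by
  obtain ⟨s, rfl⟩ := List.getLast?_eq_some_iff.1 hl
  cases s with
  | nil => rfl
  | cons a s =>
    obtain rfl : a = u := by simpa using hd
    simp at hnd

end Arcs

/-- The directed version of an oriented perfect path double cover: `P v` is a directed path
starting at `v`, each vertex is the end of exactly one path, and the paths partition the arcs
of the digraph `D`. -/
structure IsPathCover {V : Type*} (D : V → V → Prop) (P : V → List V) : Prop where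
  head : ∀ v, (P v).head? = some v
  nodup : ∀ v, (P v).Nodup
  arc : ∀ v a b, (a, b) ∈ arcs (P v) → D a b
  last : ∀ w, ∃! v, (P v).getLast? = some w
  cover : ∀ a b, D a b → ∃! v, (a, b) ∈ arcs (P v)

section PathCover

variable {V : Type*}

lemma hasOPPDC_iff {G : SimpleGraph V} : HasOPPDC G ↔ ∃ P, IsPathCover G.Adj P := by
  constructor
  · rintro ⟨P, h, hl, hc⟩
    exact ⟨P, fun v => (h v).2.2.2, fun v => (h v).2.1,
      fun v => isChain_iff_arcs.1 (h v).2.2.1, hl, hc⟩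
  · rintro ⟨P, h⟩
    refine ⟨P, fun v => ⟨?_, h.nodup v, isChain_iff_arcs.2 (h.arc v), h.head v⟩, h.last, h.cover⟩
    intro h0
    simpa [h0] using h.head v

namespace IsPathCover

variable {D E : V → V → Prop} {P : V → List V}

lemma exists_eq_cons (hP : IsPathCover D P) (v : V) : ∃ t, P v = v :: t := by
  have := hP.head v
  rcases h : P v with _ | ⟨a, t⟩ <;> simp_all

lemma mono (hP : IsPathCover D P) (h : ∀ a b, D a b ↔ E a b) : IsPathCover E P := by
  have : D = E := by ext a b; exact h a b
  exact this ▸ hP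

/-- Rerouting a cover: the ends are permuted by `σ`, the old arcs by `τ`, and the new arcs
are distributed over two paths. -/
lemma reroute (hP : IsPathCover D P) {P' : V → List V} (σ τ : Equiv.Perm V) {i j : V}
    {A B : List (V × V)}
    (head : ∀ v, (P' v).head? = some v) (nodup : ∀ v, (P' v).Nodup)
    (last : ∀ v, (P' v).getLast? = (P (σ v)).getLast?)
    (arc : ∀ v p, p ∈ arcs (P' v) ↔ p ∈ arcs (P (τ v)) ∨ v = i ∧ p ∈ A ∨ v = j ∧ p ∈ B)
    (hAB : ∀ p ∈ A, p ∉ B) (hE : ∀ a b, E a b ↔ (a, b) ∈ A ∨ (a, b) ∈ B)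
    (hDE : ∀ a b, D a b → ¬ E a b) : IsPathCover (fun a b => D a b ∨ E a b) P' := by
  refine ⟨head, nodup, fun v a b h => ?_, fun w => ?_, fun a b h => ?_⟩
  · rcases (arc v _).1 h with h | h | h
    · exact .inl (hP.arc _ a b h)
    · exact .inr ((hE a b).2 (.inl h.2))
    · exact .inr ((hE a b).2 (.inr h.2))
  · simp only [last]
    exact (Equiv.existsUnique_congr_right (e := σ)
      (q := fun v => (P v).getLast? = some w)).2 (hP.last w)
  · simp only [arc]
    rcases h with h | h
    · have h1 : (a, b) ∉ A := fun h' => hDE a b h ((hE a b).2 (.inl h'))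
      have h2 : (a, b) ∉ B := fun h' => hDE a b h ((hE a b).2 (.inr h'))
      simp only [h1, h2, and_false, or_false]
      exact (Equiv.existsUnique_congr_right (e := τ)
        (q := fun v => (a, b) ∈ arcs (P v))).2 (hP.cover a b h)
    · have hnot : ∀ v, (a, b) ∉ arcs (P v) := fun v hv => hDE a b (hP.arc v a b hv) h
      simp only [hnot, false_or]
      rcases (hE a b).1 h with h' | h'
      · exact ⟨i, .inl ⟨rfl, h'⟩, fun v hv => hv.elim (·.1) fun hv => (hAB _ h' hv.2).elim⟩
      · exact ⟨j, .inr ⟨rfl, h'⟩, fun v hv => hv.elim (fun hv => (hAB _ hv.2 h').elim) (·.1)⟩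

lemma arcs_disjoint_of_nodup {u y : V} {s r : List V} (hnd : (u :: s ++ y :: r).Nodup) :
    ∀ p ∈ arcs (u :: s ++ [y]), p ∉ arcs (y :: r ++ [u]) := fun _ h1 h2 =>
  (List.nodup_append.1 hnd).2.2 _ (fst_mem_of_mem_arcs_concat h1) _
    (fst_mem_of_mem_arcs_concat h2) rfl

open Classical in
/-- Add a directed cycle through `u` and `y`: its part from `y` to `u` is put in front of the path
starting at `u`, while the rest becomes the path starting at `u`. -/
lemma prepend (hP : IsPathCover D P) {u y : V} {s r : List V} (hnd : (u :: s ++ y :: r).Nodup)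
    (hy : P y = [y]) (hdisj : ∀ z ∈ y :: r, z ∉ P u)
    (hE : ∀ a b, E a b ↔ (a, b) ∈ arcs (u :: s ++ [y]) ∨ (a, b) ∈ arcs (y :: r ++ [u]))
    (hDE : ∀ a b, D a b → ¬ E a b) :
    IsPathCover (fun a b => D a b ∨ E a b)
      (fun v => if v = u then u :: s ++ [y] else if v = y then y :: r ++ P u else P v) := by
  obtain ⟨t, ht⟩ := hP.exists_eq_cons u
  have huy : y ≠ u := by rintro rfl; simp at hnd
  refine hP.reroute (Equiv.swap u y) (Equiv.swap u y) (i := u) (j := y) (fun v => ?_) (fun v => ?_)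
    (fun v => ?_) (fun v p => ?_) (arcs_disjoint_of_nodup hnd) hE hDE
  · split_ifs with h h
    · simp [h]
    · simp [h]
    · exact hP.head v
  · split_ifs with h h
    · exact hnd.sublist (by simp)
    · exact List.nodup_append.2 ⟨hnd.sublist (by simp), hP.nodup u,
        fun a ha b hb hab => hdisj a ha (hab ▸ hb)⟩
    · exact hP.nodup v
  · split_ifs with h h
    · rw [h, Equiv.swap_apply_left, hy, List.getLast?_concat, List.getLast?_singleton]
    · rw [h, Equiv.swap_apply_right, ht, List.getLast?_append_cons]
    · rw [Equiv.swap_apply_of_ne_of_ne ‹_› ‹_›]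
  · split_ifs with h h
    · simp [h, hy, huy.symm]
    · rw [h, Equiv.swap_apply_right, ht, arcs_append_cons, List.mem_append]
      simp [huy, or_comm]
    · simp [Equiv.swap_apply_of_ne_of_ne, *]

open Classical in
/-- Add a directed cycle through `u` and `y`: its part from `u` to `y` is put behind the path
ending at `u`, while the rest becomes the path starting at `y`. -/
lemma append (hP : IsPathCover D P) {u y w : V} {s r : List V} (hw : (P w).getLast? = some u)
    (hnd : (u :: r ++ y :: s).Nodup) (hy : P y = [y]) (hdisj : ∀ z ∈ r ++ [y], z ∉ P w)
    (hE : ∀ a b, E a b ↔ (a, b) ∈ arcs (u :: r ++ [y]) ∨ (a, b) ∈ arcs (y :: s ++ [u]))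
    (hDE : ∀ a b, D a b → ¬ E a b) :
    IsPathCover (fun a b => D a b ∨ E a b)
      (fun v => if v = w then P w ++ (r ++ [y]) else if v = y then y :: s ++ [u] else P v) := by
  obtain ⟨t, ht⟩ := List.getLast?_eq_some_iff.1 hw
  have huy : y ≠ u := by rintro rfl; simp at hnd
  have hwy : y ≠ w := by rintro rfl; simp [hy, huy] at hw
  refine hP.reroute (Equiv.swap w y) (Equiv.refl V) (i := w) (j := y) (fun v => ?_) (fun v => ?_)
    (fun v => ?_) (fun v p => ?_) (arcs_disjoint_of_nodup hnd) hE hDE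
  · split_ifs with h h
    · simp [h, hP.head w]
    · simp [h]
    · exact hP.head v
  · split_ifs with h h
    · exact List.nodup_append.2 ⟨hP.nodup w, hnd.sublist (by simp),
        fun a ha b hb hab => hdisj b hb (hab ▸ ha)⟩
    · exact (List.perm_append_comm.nodup_iff.1 hnd).sublist (by simp)
    · exact hP.nodup v
  · split_ifs with h h
    · rw [h, Equiv.swap_apply_left, hy, ← List.append_assoc, List.getLast?_concat,
        List.getLast?_singleton]
    · rw [h, Equiv.swap_apply_right, List.getLast?_concat, hw]
    · rw [Equiv.swap_apply_of_ne_of_ne ‹_› ‹_›]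
  · split_ifs with h h
    · rw [h, Equiv.refl_apply, ht, List.append_assoc, List.singleton_append, arcs_append_cons,
        List.mem_append]
      simp [hwy.symm]
    · simp [h, hy, hwy]
    · simp [*]

lemma mem_of_last (hP : IsPathCover D P) {O : Set V} (hnew : ∀ v ∉ O, P v = [v])
    {u : V} (hu : u ∈ O) :
    ∃ w ∈ O, (P w).getLast? = some u := by
  obtain ⟨w, hw, -⟩ := hP.last u
  refine ⟨w, ?_, hw⟩
  by_contra hwO
  rw [hnew w hwO] at hw
  simp at hw
  exact hwO (hw ▸ hu)

set_option maxHeartbeats 400000 in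
open Classical in
/-- An undirected cycle can be added to a cover, provided that an old vertex of the cycle is
followed by a new one and there is another new vertex on the cycle. -/
lemma exists_add_cycle (hP : IsPathCover D P) {O : Set V} (hnew : ∀ v ∉ O, P v = [v])
    (hold : ∀ v ∈ O, ∀ z ∈ P v, z ∈ O) {u x y z : V} {t : List V}
    (hl : (u :: x :: y :: z :: t).Nodup) (hu : u ∈ O) (hx : x ∉ O)
    (htwo : ∃ v ∈ y :: z :: t, v ∉ O)
    (hE : ∀ a b, E a b ↔ (a, b) ∈ arcs (u :: x :: y :: z :: t ++ [u]))
    (hDE : ∀ a b, D a b → ¬ E a b) (hDE' : ∀ a b, D a b → ¬ E b a)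
    (hEE : ∀ a b, E a b → ¬ E b a) :
    ∃ P', IsPathCover (fun a b => (D a b ∨ E a b) ∨ E b a) P' := by
  have hEr : ∀ a b, E b a ↔
      (a, b) ∈ arcs (u :: (y :: z :: t).reverse ++ [x]) ∨ (a, b) ∈ arcs (x :: [] ++ [u]) := by
    intro a b
    have h : u :: (y :: z :: t).reverse ++ x :: [u] = (u :: x :: y :: z :: t ++ [u]).reverse := by
      simp
    rw [hE, ← mem_arcs_reverse, ← h, arcs_append_cons, List.mem_append]
    rfl
  have hndr : (u :: (y :: z :: t).reverse ++ x :: []).Nodup := by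
    refine List.Perm.nodup ?_ hl
    simp only [List.cons_append, List.perm_cons]
    exact ((List.reverse_perm _).symm.cons x).trans (List.perm_append_singleton _ _).symm
  have hD2 : ∀ a b, D a b ∨ E a b → ¬ E b a := fun a b h => h.elim (hDE' a b) (hEE a b)
  have hswap : ∀ a b, (D a b ∨ E b a) ∨ E a b ↔ (D a b ∨ E a b) ∨ E b a := fun a b => by tauto
  have hD2' : ∀ a b, D a b ∨ E b a → ¬ E a b :=
    fun a b h => h.elim (hDE a b) fun h h' => hEE _ _ h h'
  have hux : x ≠ u := by rintro rfl; exact hx hu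
  obtain ⟨wu, hwuO, hwu⟩ := hP.mem_of_last hnew hu
  have hxwu : x ≠ wu := by rintro rfl; exact hx hwuO
  by_cases hsplit : ∃ a b, (a, b) ∈ arcs (y :: z :: t) ∧ a ∈ O ∧ b ∉ O
  · obtain ⟨a, b, hab, ha, hb⟩ := hsplit
    obtain ⟨l₁, l₂, hl₁₂⟩ := exists_eq_append_of_mem_arcs hab
    obtain ⟨w, hwO, hw⟩ := hP.mem_of_last hnew ha
    have hbw : b ∉ P w := fun h => hb (hold w hwO b h)
    have hxw : x ≠ w := by rintro rfl; exact hx hwO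
    rw [hl₁₂] at hl hE
    have hxb : x ≠ b := by rintro rfl; simp at hl
    have hub : u ≠ b := by rintro rfl; exact hb hu
    have h1 := hP.append (u := a) (y := b) (w := w) (r := []) (s := l₂ ++ u :: x :: l₁)
      (E := E) hw (by
        refine List.Perm.nodup ?_ hl
        exact (List.perm_append_comm (l₁ := u :: x :: l₁) (l₂ := a :: b :: l₂)).trans (by simp))
      (hnew b hb) (by simpa using hbw) (by
        intro c d
        have e₁ := arcs_append_cons (u :: x :: l₁) (b :: (l₂ ++ [u])) a
        have e₂ := arcs_append_cons (b :: l₂) (x :: (l₁ ++ [a])) u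
        simp only [List.cons_append, List.append_assoc, List.nil_append] at e₁ e₂ ⊢
        rw [hE, List.cons_append, List.cons_append, List.append_assoc, List.cons_append,
          List.cons_append, e₁, e₂]
        simp only [List.mem_append, List.mem_cons, List.cons_append, arcs_cons_cons,
          arcs_singleton, List.not_mem_nil, or_false]
        tauto) hDE
    refine ⟨_, h1.prepend (u := u) (y := x) (E := fun a b => E b a) hndr ?_ ?_ hEr hD2⟩
    · simp [hxw, hxb, hnew x hx]
    · have : x ∉ P w := fun h => hx (hold w hwO x h)
      have : x ∉ P u := fun h => hx (hold u hu x h)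
      by_cases huw : u = w <;> simp [*]
  have hy : y ∉ O := by
    intro hy
    obtain ⟨v, hv, hvO⟩ := htwo
    refine hvO (forall_mem_of_arcs hy (fun a b hab ha => ?_) v hv)
    by_contra hb
    exact hsplit ⟨a, b, hab, ha, hb⟩
  have hxy : x ≠ y := by rintro rfl; simp at hl
  have hyu : y ≠ u := by rintro rfl; exact hy hu
  have hzy : z ≠ y := by rintro rfl; simp at hl
  have hzu : z ≠ u := by rintro rfl; simp at hl
  have hzx : z ≠ x := by rintro rfl; simp at hl
  have hxu' : x ∉ P u := fun h => hx (hold u hu x h)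
  by_cases hz : z ∈ O
  · have h1 := hP.prepend (u := u) (y := x) (E := fun a b => E b a) hndr (hnew x hx)
      (by simpa using hxu') hEr hDE'
    refine ⟨_, (h1.prepend (u := z) (y := y) (E := E) (s := t ++ [u, x]) (r := []) ?_ ?_ ?_ ?_
      hD2').mono hswap⟩
    · refine List.Perm.nodup ?_ hl
      exact (List.perm_append_comm (l₁ := [u, x, y]) (l₂ := z :: t)).trans (by simp)
    · simp [hyu, hxy.symm, hnew y hy]
    · have : y ∉ P z := fun h => hy (hold z hz y h)
      simpa [hzu, hzx] using this
    · intro c d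
      have e : z :: (t ++ [u, x]) ++ [y] = z :: t ++ u :: [x, y] := by simp
      have e' : u :: x :: y :: z :: t ++ [u] = u :: x :: y :: z :: (t ++ [u]) := by simp
      rw [hE, e, e', arcs_append_cons]
      simp
      tauto
  by_cases hutriv : P u = [u]
  · have h1 := hP.prepend (u := u) (y := x) (E := E) (s := []) (r := y :: z :: t)
      hl (hnew x hx) (by rw [hutriv]; simp at hl ⊢; grind) (by
        intro c d
        rw [hE]
        simp) hDE
    refine ⟨_, h1.prepend (u := y) (y := z) (E := fun a b => E b a) (s := x :: u :: t.reverse)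
      (r := []) ?_ ?_ ?_ ?_ hD2⟩
    · refine List.Perm.nodup ?_ hl
      exact List.perm_iff_count.2 fun v => by simp [List.count_cons]; ring
    · simp [hzu, hzx, hnew z hz]
    · simpa [hyu, hxy.symm, hnew y hy] using hzy
    · intro c d
      have h : (u :: x :: y :: z :: t ++ [u]).reverse = (u :: t.reverse) ++ z :: [y, x, u] := by
        simp
      have h' : y :: x :: u :: t.reverse ++ [z] = y :: x :: u :: (t.reverse ++ [z]) := by simp
      rw [hE, ← mem_arcs_reverse, h, arcs_append_cons, h']
      simp
      tauto
  · have huwu : u ≠ wu := by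
      rintro rfl
      exact hutriv (eq_singleton_of_head?_of_getLast? (hP.head u) hwu (hP.nodup u))
    have hxwu' : x ∉ P wu := fun h => hx (hold wu hwuO x h)
    have hywu' : y ∉ P wu := fun h => hy (hold wu hwuO y h)
    have h1 := hP.append (u := u) (y := y) (w := wu) (r := [x]) (s := z :: t) (E := E) hwu hl
      (hnew y hy) (by simp [*]) (by
        intro c d
        rw [hE]
        simp
        tauto) hDE
    refine ⟨_, h1.prepend (u := u) (y := x) (E := fun a b => E b a) hndr ?_ ?_ hEr hD2⟩
    · simp [hxwu, hxy, hnew x hx]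
    · simpa [huwu, hyu.symm] using hxu'

end IsPathCover

end PathCover

/-- The arcs of a directed cycle of length `n`, listed from the vertex with index `i`. -/
lemma mem_arcs_cycle {V : Type*} {n : ℕ} [NeZero n] (f : ZMod n → V) (i : ZMod n) (a b : V) :
    (a, b) ∈ arcs ((List.range (n + 1)).map fun j : ℕ => f (i + j)) ↔
      ∃ k, a = f k ∧ b = f (k + 1) := by
  rw [mem_arcs_map_range]
  constructor
  · rintro ⟨j, -, rfl, rfl⟩
    exact ⟨i + j, rfl, by push_cast; rw [add_assoc]⟩
  · rintro ⟨k, rfl, rfl⟩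
    refine ⟨(k - i).val, ZMod.val_lt _, ?_, ?_⟩
    · simp
    · push_cast
      rw [ZMod.natCast_zmod_val]
      congr 1
      ring

lemma exists_mem_succ_notMem {n : ℕ} [NeZero n] {S : Set (ZMod n)} {p q : ZMod n} (hp : p ∈ S)
    (hq : q ∉ S) : ∃ i ∈ S, i + 1 ∉ S := by
  by_contra! h
  have key : ∀ j : ℕ, p + j ∈ S := by
    intro j
    induction j with
    | zero => simpa using hp
    | succ j ih => push_cast; rw [← add_assoc]; exact h _ ih
  exact hq (by simpa using key (q - p).val)

/-- The double cover of a subgraph, extended by trivial paths. -/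
lemma exists_isPathCover_of_subgraph {V : Type*} {G : SimpleGraph V} {H : G.Subgraph}
    (h : HasOPPDC H.coe) :
    ∃ P, IsPathCover H.Adj P ∧ (∀ v ∉ H.verts, P v = [v]) ∧
      ∀ v ∈ H.verts, ∀ z ∈ P v, z ∈ H.verts := by
  classical
  obtain ⟨Q, hQ⟩ := hasOPPDC_iff.1 h
  let P : V → List V := fun v => if hv : v ∈ H.verts then (Q ⟨v, hv⟩).map Subtype.val else [v]
  have hold : ∀ v : H.verts, P v = (Q v).map Subtype.val := fun v => by simp [P]
  have hnew : ∀ v ∉ H.verts, P v = [v] := fun v hv => by simp [P, hv]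
  refine ⟨P, ⟨fun v => ?_, fun v => ?_, fun v a b hab => ?_, fun w => ?_, fun a b hab => ?_⟩, hnew,
    fun v hv z hz => ?_⟩
  · by_cases hv : v ∈ H.verts
    · rw [hold ⟨v, hv⟩]
      rw [List.head?_map, hQ.head]
      rfl
    · simp [hnew v hv]
  · by_cases hv : v ∈ H.verts
    · rw [hold ⟨v, hv⟩]
      exact (hQ.nodup _).map Subtype.val_injective
    · simp [hnew v hv]
  · by_cases hv : v ∈ H.verts
    · rw [hold ⟨v, hv⟩] at hab
      obtain ⟨ha, hb⟩ := mem_of_mem_arcs hab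
      obtain ⟨a, -, rfl⟩ := List.mem_map.1 ha
      obtain ⟨b, -, rfl⟩ := List.mem_map.1 hb
      exact hQ.arc _ _ _ ((mem_arcs_map _ Subtype.val_injective _ _ _).1 hab)
    · simp [hnew v hv] at hab
  · by_cases hw : w ∈ H.verts
    · obtain ⟨v, hv, huniq⟩ := hQ.last ⟨w, hw⟩
      refine ⟨v, by simp only [hold, List.getLast?_map, hv, Option.map_some], fun v' hv' => ?_⟩
      beta_reduce at hv'
      by_cases hvm : v' ∈ H.verts
      · rw [hold ⟨v', hvm⟩, List.getLast?_map, Option.map_eq_some_iff] at hv'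
        obtain ⟨w', hw', rfl⟩ := hv'
        exact congrArg Subtype.val (huniq _ hw')
      · simp only [hnew v' hvm, List.getLast?_singleton, Option.some.injEq] at hv'
        exact (hvm (hv' ▸ hw)).elim
    · refine ⟨w, by simp [hnew w hw], fun v' hv' => ?_⟩
      beta_reduce at hv'
      by_cases hvm : v' ∈ H.verts
      · rw [hold ⟨v', hvm⟩, List.getLast?_map, Option.map_eq_some_iff] at hv'
        obtain ⟨w', -, rfl⟩ := hv'
        exact (hw w'.2).elim
      · simpa [hnew v' hvm] using hv'
  · obtain ⟨v, hv, huniq⟩ := hQ.cover ⟨a, H.edge_vert hab⟩ ⟨b, H.edge_vert hab.symm⟩ hab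
    refine ⟨v, ?_, fun v' hv' => ?_⟩ <;> beta_reduce at *
    · rw [hold]
      exact (mem_arcs_map _ Subtype.val_injective _ _ _).2 hv
    · by_cases hvm : v' ∈ H.verts
      · rw [hold ⟨v', hvm⟩] at hv'
        exact congrArg Subtype.val
          (huniq _ ((mem_arcs_map _ Subtype.val_injective ⟨a, _⟩ ⟨b, _⟩ _).1 hv'))
      · simp [hnew v' hvm] at hv'
  · rw [hold ⟨v, hv⟩] at hz
    obtain ⟨z, -, rfl⟩ := List.mem_map.1 hz
    exact z.2

/-- if the edge set of a connected graph `G` is partitioned into a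
cycle `C` of length at least 4 and a connected graph `G'` having an OPPDC, with
at least 2 vertices of `C` not in `G'`, then `G` has an OPPDC. -/
theorem cycle_plus_graph_hasOPPDC {V : Type*} [Fintype V] (G : SimpleGraph V)
    (hGconn : G.Connected)
    (C G' : G.Subgraph)
    (hCverts : C.verts = C.support) (hG'verts : G'.verts = G'.support)
    (hdisj : C.edgeSet ∩ G'.edgeSet = ∅)
    (hcover : C.edgeSet ∪ G'.edgeSet = G.edgeSet)
    (hC : ∃ n : ℕ, 4 ≤ n ∧ Nonempty (C.coe ≃g cycleGraph n))
    (hG'conn : G'.coe.Connected)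
    (hG' : HasOPPDC G'.coe)
    (hnew : 2 ≤ (C.verts \ G'.verts).ncard) :
    HasOPPDC G := by
  obtain ⟨n, hn, ⟨e⟩⟩ := hC
  have : NeZero n := ⟨by omega⟩
  let f : ZMod n → V := fun i => (e.symm i : V)
  have hf : f.Injective := Subtype.val_injective.comp e.symm.injective
  have hfC : ∀ v ∈ C.verts, ∃ i, f i = v := fun v hv => ⟨e ⟨v, hv⟩, by simp [f]⟩
  have hcast : ∀ m : ℕ, 0 < m → m < n → (m : ZMod n) ≠ 0 := fun m h0 hm h =>
    absurd (Nat.le_of_dvd h0 ((ZMod.natCast_eq_zero_iff m n).1 h)) (by omega)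
  have h1 : (1 : ZMod n) ≠ 0 := by simpa using hcast 1 (by omega) (by omega)
  have h2 : (2 : ZMod n) ≠ 0 := by simpa using hcast 2 (by omega) (by omega)
  let E : V → V → Prop := fun a b => ∃ k, a = f k ∧ b = f (k + 1)
  have hCE : ∀ a b, C.Adj a b ↔ E a b ∨ E b a := by
    have key : ∀ i j, C.Adj (f i) (f j) ↔ (j = i + 1 ∨ i = j + 1) := by
      intro i j
      have : C.Adj (f i) (f j) ↔ (cycleGraph n).Adj i j := e.symm.map_adj_iff (v := i) (w := j)
      rw [this, cycleGraph, SimpleGraph.fromRel_adj]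
      refine ⟨fun h => h.2, fun h => ⟨?_, h⟩⟩
      rintro rfl
      simp [h1] at h
    intro a b
    constructor
    · intro h
      obtain ⟨i, rfl⟩ := hfC a (C.edge_vert h)
      obtain ⟨j, rfl⟩ := hfC b (C.edge_vert h.symm)
      rcases (key i j).1 h with rfl | rfl
      · exact .inl ⟨i, rfl, rfl⟩
      · exact .inr ⟨j, rfl, rfl⟩
    · rintro (⟨k, rfl, rfl⟩ | ⟨k, rfl, rfl⟩)
      · exact (key _ _).2 (.inl rfl)
      · exact (key _ _).2 (.inr rfl)
  have hG : ∀ a b, (G'.Adj a b ∨ E a b) ∨ E b a ↔ G.Adj a b := by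
    intro a b
    rw [or_assoc, ← hCE, or_comm, ← SimpleGraph.mem_edgeSet, ← hcover, Set.mem_union,
      SimpleGraph.Subgraph.mem_edgeSet, SimpleGraph.Subgraph.mem_edgeSet]
  have hdis : ∀ a b, G'.Adj a b → ¬ C.Adj a b := fun a b h h' =>
    (Set.eq_empty_iff_forall_notMem.1 hdisj) s(a, b) ⟨h', h⟩
  have hEE : ∀ a b, E a b → ¬ E b a := by
    rintro _ _ ⟨k, rfl, rfl⟩ ⟨j, h, h'⟩
    have e1 := hf h
    have e2 := hf h'
    refine h2 (add_left_cancel (a := k) ?_)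
    rw [add_zero]
    nth_rw 2 [e2]
    rw [← e1]
    ring
  obtain ⟨v₁, v₂, ⟨hv₁, hv₁'⟩, ⟨hv₂, hv₂'⟩, hv⟩ :=
    (Set.one_lt_ncard_iff (Set.toFinite _)).1 (show 1 < (C.verts \ G'.verts).ncard by omega)
  have hmeet : ∃ p, f p ∈ G'.verts := by
    by_contra! h
    obtain ⟨w⟩ := hG'conn.nonempty
    have hstep : ∀ a b, G.Adj a b → a ∈ G'.verts → b ∈ G'.verts := by
      intro a b hab ha
      rcases (hG a b).2 hab with (hab | ⟨k, rfl, -⟩) | ⟨k, -, rfl⟩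
      · exact G'.edge_vert hab.symm
      · exact (h _ ha).elim
      · exact (h _ ha).elim
    obtain ⟨p⟩ := hGconn.preconnected w v₁
    have hp : ∀ a b, G.Walk a b → a ∈ G'.verts → b ∈ G'.verts := by
      intro a b p
      induction p with
      | nil => exact id
      | cons hab _ ih => exact fun ha => ih (hstep _ _ hab ha)
    exact hv₁' (hp _ _ p w.2)
  obtain ⟨p, hp⟩ := hmeet
  obtain ⟨q, rfl⟩ := hfC v₁ hv₁
  obtain ⟨i, hi, hi'⟩ := exists_mem_succ_notMem (S := f ⁻¹' G'.verts) hp hv₁'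
  obtain ⟨P, hP, hnewP, holdP⟩ := exists_isPathCover_of_subgraph hG'
  let g : ℕ → V := fun j => f (i + j)
  obtain ⟨m, rfl⟩ := Nat.exists_eq_add_of_le' hn
  let t := (List.range m).map fun j => g (j + 4)
  have hlist : (List.range (m + 4)).map g = f i :: f (i + 1) :: g 2 :: g 3 :: t := by
    simp [List.range_succ_eq_map, g, t, Function.comp_def, add_assoc]
  have hlist' : (List.range (m + 4 + 1)).map g = f i :: f (i + 1) :: g 2 :: g 3 :: t ++ [f i] := by
    rw [List.range_succ, List.map_append, hlist]
    have : g (m + 4) = f i := by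
      simp only [g]
      rw [ZMod.natCast_self, add_zero]
    simp [this]
  have hnd : (f i :: f (i + 1) :: g 2 :: g 3 :: t).Nodup := by
    rw [← hlist]
    refine List.Nodup.map_on (fun a ha b hb hab => ?_) List.nodup_range
    have h := add_left_cancel (hf hab)
    rw [ZMod.natCast_eq_natCast_iff'] at h
    rwa [Nat.mod_eq_of_lt (List.mem_range.1 ha), Nat.mod_eq_of_lt (List.mem_range.1 hb)] at h
  have hall : ∀ k, f k ∈ f i :: f (i + 1) :: g 2 :: g 3 :: t := by
    intro k
    rw [← hlist]
    exact List.mem_map.2 ⟨(k - i).val, List.mem_range.2 (ZMod.val_lt _), by simp [g]⟩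
  have htwo : ∃ v ∈ g 2 :: g 3 :: t, v ∉ G'.verts := by
    have hmem : ∀ v ∈ C.verts, v ∉ G'.verts → v ≠ f (i + 1) →
        ∃ v ∈ g 2 :: g 3 :: t, v ∉ G'.verts := by
      intro v hvC hvG hne
      obtain ⟨k, rfl⟩ := hfC v hvC
      have hk : f k ≠ f i := fun h => hvG (h ▸ hi)
      exact ⟨f k, (List.mem_cons.1 ((List.mem_cons.1 (hall k)).resolve_left hk)).resolve_left hne,
        hvG⟩
    by_cases hq : f q = f (i + 1)
    · exact hmem v₂ hv₂ hv₂' (fun h => hv (hq.trans h.symm))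
    · exact hmem _ hv₁ hv₁' hq
  obtain ⟨P', hP'⟩ := hP.exists_add_cycle hnewP holdP (E := E) hnd hi hi' htwo
    (fun a b => by rw [← hlist']; exact (mem_arcs_cycle f i a b).symm)
    (fun a b h h' => hdis a b h ((hCE a b).2 (.inl h')))
    (fun a b h h' => hdis a b h ((hCE a b).2 (.inr h'))) hEE
  exact hasOPPDC_iff.2 ⟨P', hP'.mono hG⟩
end

section
/- Every 4-regular graph with a cut vertex has an oriented perfect path double cover. -/
namespace PathCover

variable {V : Type*}

/-- The multiset of arcs traversed by a list of vertices. -/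
def arcs (p : List V) : Multiset (V × V) := ↑(p.zip p.tail)

@[simp] theorem arcs_singleton (a : V) : arcs [a] = 0 := rfl

@[simp] theorem arcs_cons_cons (a b : V) (l : List V) :
    arcs (a :: b :: l) = {(a, b)} + arcs (b :: l) := rfl

theorem arcs_append (l₁ l₂ : List V) (a : V) :
    arcs (l₁ ++ a :: l₂) = arcs (l₁ ++ [a]) + arcs (a :: l₂) := by
  induction l₁ with
  | nil => simp
  | cons b l₁ ih =>
    cases l₁ with
    | nil => simp
    | cons c l₁ => simpa [add_assoc] using ih

theorem arcs_append_cons_cons (l₁ l₂ : List V) (a b : V) :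
    arcs (l₁ ++ a :: b :: l₂) = arcs (l₁ ++ [a]) + ({(a, b)} + arcs (b :: l₂)) := by
  rw [arcs_append, arcs_cons_cons]

theorem mem_arcs_iff {p : List V} {a b : V} :
    (a, b) ∈ arcs p ↔ ∃ l₁ l₂, p = l₁ ++ a :: b :: l₂ := by
  constructor
  · intro h
    induction p with
    | nil => simp [arcs] at h
    | cons c l ih =>
      cases l with
      | nil => simp at h
      | cons d l =>
        simp only [arcs_cons_cons, Multiset.mem_add, Multiset.mem_singleton, Prod.mk.injEq] at h
        rcases h with ⟨rfl, rfl⟩ | h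
        · exact ⟨[], l, rfl⟩
        · obtain ⟨l₁, l₂, h⟩ := ih h
          exact ⟨c :: l₁, l₂, by rw [h]; rfl⟩
  · rintro ⟨l₁, l₂, rfl⟩
    rw [arcs_append]
    simp

theorem mem_of_mem_arcs_right {p : List V} {a b : V} (h : (a, b) ∈ arcs p) : b ∈ p := by
  obtain ⟨l₁, l₂, rfl⟩ := mem_arcs_iff.1 h
  simp

theorem head?_ne_of_mem_arcs {p : List V} (hp : p.Nodup) {a b : V} (h : (a, b) ∈ arcs p) :
    p.head? ≠ some b := by
  obtain ⟨l₁, l₂, rfl⟩ := mem_arcs_iff.1 h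
  cases l₁ <;> simp_all

theorem eq_of_mem_arcs {p : List V} (hp : p.Nodup) {a b c : V} (h : (a, c) ∈ arcs p)
    (h' : (b, c) ∈ arcs p) : a = b := by
  obtain ⟨l₁, l₂, rfl⟩ := mem_arcs_iff.1 h
  obtain ⟨l₃, l₄, h₂⟩ := mem_arcs_iff.1 h'
  have h₃ : (l₁ ++ [a]) ++ c :: l₂ = (l₃ ++ [b]) ++ c :: l₄ := by simpa using h₂
  rcases List.append_eq_append_iff.1 h₃ with ⟨t, ht, ht'⟩ | ⟨t, ht, ht'⟩ <;>
    cases t <;> simp_all <;> grind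

theorem swap_not_mem_arcs {p : List V} (hp : p.Nodup) {a b : V} (h : (a, b) ∈ arcs p) :
    (b, a) ∉ arcs p := by
  intro h'
  obtain ⟨l₁, l₂, rfl⟩ := mem_arcs_iff.1 h
  obtain ⟨l₃, l₄, h₂⟩ := mem_arcs_iff.1 h'
  have h₃ : l₁ ++ a :: b :: l₂ = (l₃ ++ [b]) ++ a :: l₄ := by simpa using h₂
  rcases List.append_eq_append_iff.1 h₃ with ⟨t, ht, ht'⟩ | ⟨t, ht, ht'⟩ <;>
    cases t <;> simp_all <;> grind

section
open scoped Classical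

/-- The arcs of the symmetric orientation of the subgraph of `G` induced by `S`. -/
noncomputable def arcsOn (G : SimpleGraph V) (S : Finset V) : Finset (V × V) :=
  (S ×ˢ S).filter fun e => G.Adj e.1 e.2

theorem mem_arcsOn {G : SimpleGraph V} {S : Finset V} {a b : V} :
    (a, b) ∈ arcsOn G S ↔ a ∈ S ∧ b ∈ S ∧ G.Adj a b := by
  simp [arcsOn, and_assoc]

/-- `M` is an oriented perfect path double cover of the subgraph of `G` induced by `S`. -/
structure IsCover (G : SimpleGraph V) (S : Finset V) (M : Multiset (List V)) : Prop where
  nodup : ∀ p ∈ M, p.Nodup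
  head : M.map List.head? = S.val.map some
  last : M.map List.getLast? = S.val.map some
  arcs : M.bind arcs = (arcsOn G S).val

/-- The subgraph of `G` induced by `S` has an oriented perfect path double cover. -/
def Coverable (G : SimpleGraph V) (S : Finset V) : Prop := ∃ M, IsCover G S M

/-- The neighbours of `v` in `S`. -/
noncomputable def nbrs (G : SimpleGraph V) (S : Finset V) (v : V) : Finset V :=
  S.filter (G.Adj v)

theorem mem_nbrs {G : SimpleGraph V} {S : Finset V} {v w : V} :
    w ∈ nbrs G S v ↔ w ∈ S ∧ G.Adj v w := by
  simp [nbrs]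

variable {G : SimpleGraph V} {S T K S₁ S₂ : Finset V} {M M₁ M₂ : Multiset (List V)}

theorem arcsOn_insert {x : V} (hx : x ∉ S) :
    (arcsOn G (insert x S)).val =
      (nbrs G S x).val.map (fun u => (x, u)) + (nbrs G S x).val.map (fun u => (u, x))
        + (arcsOn G S).val := by
  have h1 : ((nbrs G S x).val.map (fun u => (x, u))).Nodup :=
    (nbrs G S x).nodup.map fun _ _ h => by simpa using h
  have h2 : ((nbrs G S x).val.map (fun u => (u, x))).Nodup :=
    (nbrs G S x).nodup.map fun _ _ h => by simpa using h
  refine ((arcsOn G (insert x S)).nodup.ext ?_).2 ?_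
  · rw [Multiset.nodup_add, Multiset.nodup_add]
    refine ⟨⟨h1, h2, ?_⟩, (arcsOn G S).nodup, ?_⟩
    · rw [Multiset.disjoint_left]
      rintro ⟨u, v⟩ h h'
      simp only [Multiset.mem_map, Finset.mem_val, mem_nbrs, Prod.mk.injEq] at h h'
      grind
    · rw [Multiset.disjoint_left]
      rintro ⟨u, v⟩ h h'
      simp only [Multiset.mem_add, Multiset.mem_map, Finset.mem_val, mem_nbrs, Prod.mk.injEq,
        mem_arcsOn] at h h'
      grind
  · rintro ⟨u, v⟩
    simp only [Multiset.mem_add, Multiset.mem_map, Finset.mem_val, mem_nbrs, Prod.mk.injEq,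
        mem_arcsOn, Finset.mem_insert]
    have := G.irrefl (v := x)
    have := fun u v => G.adj_comm u v
    grind

namespace IsCover

theorem exists_head (h : IsCover G S M) {v : V} (hv : v ∈ S) : ∃ p ∈ M, p.head? = some v := by
  have : some v ∈ M.map List.head? := by rw [h.head]; exact Multiset.mem_map_of_mem _ hv
  simpa using this

theorem exists_last (h : IsCover G S M) {v : V} (hv : v ∈ S) :
    ∃ p ∈ M, p.getLast? = some v := by
  have : some v ∈ M.map List.getLast? := by rw [h.last]; exact Multiset.mem_map_of_mem _ hv
  simpa using this

theorem exists_arc (h : IsCover G S M) {a b : V} (ha : a ∈ S) (hb : b ∈ S) (hab : G.Adj a b) :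
    ∃ p ∈ M, (a, b) ∈ PathCover.arcs p := by
  have : (a, b) ∈ M.bind PathCover.arcs := by rw [h.arcs]; exact mem_arcsOn.2 ⟨ha, hb, hab⟩
  simpa using this

theorem eq_of_head (h : IsCover G S M) {p q : List V} (hp : p ∈ M) (hq : q ∈ M)
    (hpq : p.head? = q.head?) : p = q := by
  by_contra hne
  obtain ⟨N, rfl⟩ := Multiset.exists_cons_of_mem hp
  obtain ⟨N, rfl⟩ := Multiset.exists_cons_of_mem
    ((Multiset.mem_cons.1 hq).resolve_left (Ne.symm hne))
  have : (S.val.map some).Nodup := S.nodup.map (Option.some_injective _)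
  rw [← h.head] at this
  simp [hpq] at this

theorem eq_of_last (h : IsCover G S M) {p q : List V} (hp : p ∈ M) (hq : q ∈ M)
    (hpq : p.getLast? = q.getLast?) : p = q := by
  by_contra hne
  obtain ⟨N, rfl⟩ := Multiset.exists_cons_of_mem hp
  obtain ⟨N, rfl⟩ := Multiset.exists_cons_of_mem
    ((Multiset.mem_cons.1 hq).resolve_left (Ne.symm hne))
  have : (S.val.map some).Nodup := S.nodup.map (Option.some_injective _)
  rw [← h.last] at this
  simp [hpq] at this

theorem ne_nil (h : IsCover G S M) {p : List V} (hp : p ∈ M) : p ≠ [] := by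
  rintro rfl
  have : none ∈ M.map List.head? := Multiset.mem_map_of_mem _ hp
  rw [h.head] at this
  simp at this

theorem subset (h : IsCover G S M) {p : List V} (hp : p ∈ M) {v : V} (hv : v ∈ p) : v ∈ S := by
  obtain ⟨l₁, l₂, rfl⟩ := List.append_of_mem hv
  cases l₁ with
  | nil =>
    have : some v ∈ M.map List.head? := Multiset.mem_map.2 ⟨_, hp, rfl⟩
    rw [h.head] at this
    simpa using this
  | cons b l₁ =>
    obtain ⟨l₃, w, h₃⟩ : ∃ l₃ w, b :: l₁ = l₃ ++ [w] :=
      ⟨_, _, (List.dropLast_append_getLast (List.cons_ne_nil b l₁)).symm⟩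
    have : (w, v) ∈ M.bind PathCover.arcs :=
      Multiset.mem_bind.2 ⟨_, hp, mem_arcs_iff.2 ⟨l₃, l₂, by rw [h₃]; simp⟩⟩
    rw [h.arcs] at this
    exact (mem_arcsOn.1 this).2.1

end IsCover

theorem IsCover.exists_mem_ne_ne (h : IsCover G S M) {c u w : V} (hc : c ∈ S) (hu : u ∈ S)
    (hw : w ∈ S) (huw : u ≠ w) (hcu : G.Adj u c) (hcw : G.Adj w c) (A B : List V) :
    ∃ T ∈ M, c ∈ T ∧ T ≠ A ∧ T ≠ B := by
  obtain ⟨P, hP, hPc⟩ := h.exists_head hc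
  obtain ⟨R, hR, hRc⟩ := h.exists_arc hu hc hcu
  obtain ⟨R', hR', hRc'⟩ := h.exists_arc hw hc hcw
  have h1 : R ≠ R' := by
    rintro rfl
    exact huw (eq_of_mem_arcs (h.nodup _ hR) hRc hRc')
  have h2 : P ≠ R := by
    rintro rfl
    exact head?_ne_of_mem_arcs (h.nodup _ hR) hRc hPc
  have h3 : P ≠ R' := by
    rintro rfl
    exact head?_ne_of_mem_arcs (h.nodup _ hR') hRc' hPc
  have h4 : c ∈ P := List.mem_of_head? hPc
  have h5 := mem_of_mem_arcs_right hRc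
  have h6 := mem_of_mem_arcs_right hRc'
  grind

theorem Multiset.exists_eq_cons_cons {α : Type*} {M : Multiset α} {a b : α} (ha : a ∈ M)
    (hb : b ∈ M) (hab : a ≠ b) : ∃ N, M = a ::ₘ b ::ₘ N := by
  obtain ⟨N, rfl⟩ := Multiset.exists_cons_of_mem ha
  obtain ⟨N, rfl⟩ := Multiset.exists_cons_of_mem ((Multiset.mem_cons.1 hb).resolve_left hab.symm)
  exact ⟨N, rfl⟩

/-- Adding a vertex with exactly two neighbours, one of which has degree at least two. -/
theorem Coverable.insert_two (hS : Coverable G S) {x a b u w : V} (hx : x ∉ S) (hab : a ≠ b)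
    (hn : nbrs G S x = {a, b}) (hu : u ∈ S) (hw : w ∈ S) (huw : u ≠ w) (hau : G.Adj u a)
    (haw : G.Adj w a) : Coverable G (insert x S) := by
  obtain ⟨M, h⟩ := hS
  have ha : a ∈ S := (mem_nbrs.1 (hn ▸ Finset.mem_insert_self a {b})).1
  have hb : b ∈ S := (mem_nbrs.1 (hn ▸ Finset.mem_insert_of_mem (Finset.mem_singleton_self b))).1
  have hxa : x ≠ a := by rintro rfl; exact hx ha
  have hxb : x ≠ b := by rintro rfl; exact hx hb
  obtain ⟨P, hP, hPb⟩ := h.exists_head hb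
  obtain ⟨Q, hQ, hQb⟩ := h.exists_last hb
  obtain ⟨T, hT, haT, hTP, hTQ⟩ := h.exists_mem_ne_ne ha hu hw huw hau haw P Q
  obtain ⟨T₁, T₂, rfl⟩ := List.append_of_mem haT
  have hnT := h.nodup _ hT
  have hxT : x ∉ T₁ ++ a :: T₂ := fun hh => hx (h.subset hT hh)
  have hxP : x ∉ P := fun hh => hx (h.subset hP hh)
  have hxQ : x ∉ Q := fun hh => hx (h.subset hQ hh)
  have harcs : (arcsOn G (insert x S)).val =
      {(x, a)} + {(x, b)} + {(a, x)} + {(b, x)} + (arcsOn G S).val := by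
    rw [arcsOn_insert hx, hn, Finset.insert_val_of_notMem (by simpa using hab)]
    simp [← Multiset.singleton_add]
    abel
  have hcases : b ∉ T₂ ∨ b ∉ T₁ := by grind
  rcases hcases with hbT | hbT
  · obtain ⟨N, rfl⟩ := Multiset.exists_eq_cons_cons hT hP hTP
    obtain ⟨P, rfl⟩ := List.head?_eq_some_iff.1 hPb
    have hnP := h.nodup _ hP
    refine ⟨(T₁ ++ [a, x]) ::ₘ (b :: x :: a :: T₂) ::ₘ (x :: b :: P) ::ₘ N, ?_, ?_, ?_, ?_⟩
    · intro p hp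
      simp only [Multiset.mem_cons] at hp
      rcases hp with rfl | rfl | rfl | hp
      · grind
      · grind
      · grind
      · exact h.nodup _ (by simp [hp])
    · have := h.head
      simp [Finset.insert_val_of_notMem hx, ← this, ← Multiset.singleton_add]
      abel
    · have := h.last
      rw [Finset.insert_val_of_notMem hx, Multiset.map_cons some, ← this]
      simp only [Multiset.map_cons, List.getLast?_append_cons, List.getLast?_cons_cons,
        List.getLast?_singleton]
    · rw [harcs, ← h.arcs]
      simp only [Multiset.cons_bind, arcs_cons_cons, arcs_singleton, add_zero,
        arcs_append T₁ T₂ a, arcs_append_cons_cons]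
      abel
  · obtain ⟨N, rfl⟩ := Multiset.exists_eq_cons_cons hT hQ hTQ
    obtain ⟨Q, rfl⟩ := List.getLast?_eq_some_iff.1 hQb
    have hnQ := h.nodup _ hQ
    refine ⟨(T₁ ++ [a, x, b]) ::ₘ (Q ++ [b, x]) ::ₘ (x :: a :: T₂) ::ₘ N, ?_, ?_, ?_, ?_⟩
    · intro p hp
      simp only [Multiset.mem_cons] at hp
      rcases hp with rfl | rfl | rfl | hp
      · grind
      · grind
      · grind
      · exact h.nodup _ (by simp [hp])
    · have := h.head
      simp [Finset.insert_val_of_notMem hx, ← this, ← Multiset.singleton_add]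
      abel
    · have := h.last
      rw [Finset.insert_val_of_notMem hx, Multiset.map_cons some, ← this]
      simp only [Multiset.map_cons, List.getLast?_append_cons, List.getLast?_cons_cons,
        List.getLast?_singleton]
      simp only [← Multiset.singleton_add]
      abel
    · rw [harcs, ← h.arcs]
      simp only [Multiset.cons_bind, arcs_cons_cons, arcs_singleton, add_zero,
        arcs_append T₁ T₂ a, arcs_append_cons_cons]
      abel

/-- `G` together with the edge `ab`. -/
def addEdge (G : SimpleGraph V) (a b : V) : SimpleGraph V := G ⊔ SimpleGraph.edge a b

theorem addEdge_adj {a b u v : V} (hab : a ≠ b) :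
    (addEdge G a b).Adj u v ↔ G.Adj u v ∨ (u = a ∧ v = b) ∨ (u = b ∧ v = a) := by
  simp only [addEdge, SimpleGraph.sup_adj, SimpleGraph.edge_adj]
  grind

theorem arcsOn_addEdge {a b : V} (ha : a ∈ S) (hb : b ∈ S) (hab : a ≠ b) (hG : ¬ G.Adj a b) :
    (arcsOn (addEdge G a b) S).val = {(a, b)} + {(b, a)} + (arcsOn G S).val := by
  have hG' : ¬ G.Adj b a := fun h => hG h.symm
  refine ((arcsOn _ S).nodup.ext ?_).2 ?_
  · rw [add_assoc, Multiset.singleton_add, Multiset.singleton_add, Multiset.nodup_cons,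
      Multiset.nodup_cons]
    refine ⟨?_, ?_, (arcsOn G S).nodup⟩
    · simp [mem_arcsOn, hG, hab]
    · simp [mem_arcsOn, hG']
  · rintro ⟨u, v⟩
    simp only [Multiset.mem_add, Finset.mem_val, Prod.mk.injEq, Multiset.mem_singleton,
        mem_arcsOn, addEdge_adj hab]
    grind

/-- Subdividing an edge by a new vertex `x`. -/
theorem Coverable.subdivide {a b x : V} (hS : Coverable (addEdge G a b) S) (hx : x ∉ S)
    (hab : a ≠ b) (hG : ¬ G.Adj a b) (hn : nbrs G S x = {a, b}) :
    Coverable G (insert x S) := by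
  obtain ⟨M, h⟩ := hS
  have ha : a ∈ S := (mem_nbrs.1 (hn ▸ Finset.mem_insert_self a {b})).1
  have hb : b ∈ S := (mem_nbrs.1 (hn ▸ Finset.mem_insert_of_mem (Finset.mem_singleton_self b))).1
  obtain ⟨A, hA, hAab⟩ := h.exists_arc ha hb ((addEdge_adj hab).2 (by simp))
  obtain ⟨B, hB, hBba⟩ := h.exists_arc hb ha ((addEdge_adj hab).2 (by simp))
  have hAB : A ≠ B := by
    rintro rfl
    exact swap_not_mem_arcs (h.nodup _ hA) hAab hBba
  have hnA := h.nodup _ hA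
  have hnB := h.nodup _ hB
  have hxA : x ∉ A := fun hh => hx (h.subset hA hh)
  have hxB : x ∉ B := fun hh => hx (h.subset hB hh)
  obtain ⟨A₁, A₂, rfl⟩ := mem_arcs_iff.1 hAab
  obtain ⟨B₁, B₂, rfl⟩ := mem_arcs_iff.1 hBba
  obtain ⟨N, rfl⟩ := Multiset.exists_eq_cons_cons hA hB hAB
  have harcs : (arcsOn G (insert x S)).val =
      {(x, a)} + {(x, b)} + {(a, x)} + {(b, x)} + (arcsOn G S).val := by
    rw [arcsOn_insert hx, hn, Finset.insert_val_of_notMem (by simpa using hab)]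
    simp [← Multiset.singleton_add]
    abel
  refine ⟨(A₁ ++ a :: x :: b :: A₂) ::ₘ (B₁ ++ b :: x :: a :: B₂) ::ₘ [x] ::ₘ N, ?_, ?_, ?_, ?_⟩
  · intro p hp
    simp only [Multiset.mem_cons] at hp
    rcases hp with rfl | rfl | rfl | hp
    · grind
    · grind
    · grind
    · exact h.nodup _ (by simp [hp])
  · have := h.head
    simp [Finset.insert_val_of_notMem hx, ← this, ← Multiset.singleton_add]
    abel
  · have := h.last
    rw [Finset.insert_val_of_notMem hx, Multiset.map_cons some, ← this]
    simp only [Multiset.map_cons, List.getLast?_append_cons, List.getLast?_cons_cons,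
      List.getLast?_singleton]
    simp only [← Multiset.singleton_add]
    abel
  · rw [harcs, ← add_right_inj ({(a, b)} + {(b, a)})]
    have := h.arcs
    rw [arcsOn_addEdge ha hb hab hG] at this
    rw [add_left_comm, ← this]
    simp only [Multiset.cons_bind, arcs_cons_cons, arcs_singleton,
      arcs_append_cons_cons]
    abel

/-- Subdividing an edge `ab` by a new vertex `x` and joining `x` to a third vertex `c`. -/
theorem Coverable.subdivide_join {a b c x u w : V} (hS : Coverable (addEdge G a b) S)
    (hx : x ∉ S) (hab : a ≠ b) (hac : a ≠ c) (hbc : b ≠ c) (hG : ¬ G.Adj a b)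
    (hn : nbrs G S x = {a, b, c}) (hu : u ∈ S) (hw : w ∈ S) (huw : u ≠ w)
    (huc : G.Adj u c) (hwc : G.Adj w c) :
    Coverable G (insert x S) := by
  obtain ⟨M, h⟩ := hS
  have ha : a ∈ S := (mem_nbrs.1 (by rw [hn]; simp)).1
  have hb : b ∈ S := (mem_nbrs.1 (by rw [hn]; simp)).1
  have hc : c ∈ S := (mem_nbrs.1 (by rw [hn]; simp)).1
  obtain ⟨A, hA, hAab⟩ := h.exists_arc ha hb ((addEdge_adj hab).2 (by simp))
  obtain ⟨B, hB, hBba⟩ := h.exists_arc hb ha ((addEdge_adj hab).2 (by simp))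
  have hAB : A ≠ B := by
    rintro rfl
    exact swap_not_mem_arcs (h.nodup _ hA) hAab hBba
  obtain ⟨T, hT, hcT, hTA, hTB⟩ := h.exists_mem_ne_ne hc hu hw huw
    ((addEdge_adj hab).2 (.inl huc)) ((addEdge_adj hab).2 (.inl hwc)) A B
  have hnA := h.nodup _ hA
  have hnB := h.nodup _ hB
  have hnT := h.nodup _ hT
  have hxA : x ∉ A := fun hh => hx (h.subset hA hh)
  have hxB : x ∉ B := fun hh => hx (h.subset hB hh)
  have hxT : x ∉ T := fun hh => hx (h.subset hT hh)
  obtain ⟨A₁, A₂, rfl⟩ := mem_arcs_iff.1 hAab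
  obtain ⟨B₁, B₂, rfl⟩ := mem_arcs_iff.1 hBba
  obtain ⟨T₁, T₂, rfl⟩ := List.append_of_mem hcT
  obtain ⟨N, rfl⟩ := Multiset.exists_cons_of_mem hT
  obtain ⟨N, rfl⟩ := Multiset.exists_eq_cons_cons
    ((Multiset.mem_cons.1 hA).resolve_left hTA.symm)
    ((Multiset.mem_cons.1 hB).resolve_left hTB.symm) hAB
  have harcs : (arcsOn G (insert x S)).val =
      {(x, a)} + {(x, b)} + {(x, c)} + {(a, x)} + {(b, x)} + {(c, x)} + (arcsOn G S).val := by
    rw [arcsOn_insert hx, hn, Finset.insert_val_of_notMem (by simp [hab, hac]),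
      Finset.insert_val_of_notMem (by simpa using hbc)]
    simp [← Multiset.singleton_add]
    abel
  refine ⟨(A₁ ++ a :: x :: b :: A₂) ::ₘ (B₁ ++ b :: x :: a :: B₂) ::ₘ (T₁ ++ [c, x]) ::ₘ
    (x :: c :: T₂) ::ₘ N, ?_, ?_, ?_, ?_⟩
  · intro p hp
    simp only [Multiset.mem_cons] at hp
    rcases hp with rfl | rfl | rfl | rfl | hp
    · grind
    · grind
    · grind
    · grind
    · exact h.nodup _ (by simp [hp])
  · have := h.head
    simp [Finset.insert_val_of_notMem hx, ← this, ← Multiset.singleton_add]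
    abel
  · have := h.last
    rw [Finset.insert_val_of_notMem hx, Multiset.map_cons some, ← this]
    simp only [Multiset.map_cons, List.getLast?_append_cons, List.getLast?_cons_cons,
      List.getLast?_singleton]
    simp only [← Multiset.singleton_add]
    abel
  · rw [harcs, ← add_right_inj ({(a, b)} + {(b, a)})]
    have := h.arcs
    rw [arcsOn_addEdge ha hb hab hG] at this
    rw [add_left_comm, ← this]
    simp only [Multiset.cons_bind, arcs_cons_cons, arcs_singleton, add_zero,
      arcs_append T₁ T₂ c, arcs_append_cons_cons]
    abel

/-- The list containing `f v`, provided that `f` moves `v`. -/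
noncomputable def moved (f : V → V) : Option V → List V
  | some v => if f v = v then [] else [f v]
  | none => []

/-- Extend a path at its start along `g` and at its end along `f`. -/
noncomputable def extend (f g : V → V) (p : List V) : List V :=
  moved g p.head? ++ (p ++ moved f p.getLast?)

theorem head?_extend {f g : V → V} {p : List V} {u : V} (hu : p.head? = some u) :
    (extend f g p).head? = some (g u) := by
  obtain ⟨l, rfl⟩ := List.head?_eq_some_iff.1 hu
  simp only [extend, moved, List.head?_cons]
  split_ifs with h <;> simp [h]

theorem getLast?_extend {f g : V → V} {p : List V} {v : V} (hv : p.getLast? = some v) :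
    (extend f g p).getLast? = some (f v) := by
  obtain ⟨l, rfl⟩ := List.getLast?_eq_some_iff.1 hv
  simp only [extend, moved, List.getLast?_concat]
  split_ifs with h
  · simp [h]
  · rw [← List.append_assoc, List.getLast?_concat]

theorem arcs_extend {f g : V → V} {p : List V} {u v : V} (hu : p.head? = some u)
    (hv : p.getLast? = some v) :
    arcs (extend f g p) = (if g u = u then 0 else {(g u, u)}) + arcs p +
      (if f v = v then 0 else {(v, f v)}) := by
  have h1 : arcs (p ++ moved f (some v)) = arcs p + (if f v = v then 0 else {(v, f v)}) := by
    obtain ⟨l, rfl⟩ := List.getLast?_eq_some_iff.1 hv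
    simp only [moved]
    split_ifs with h
    · simp
    · rw [List.append_assoc, List.singleton_append, arcs_append_cons_cons]
      simp
  rw [extend, hv, hu, add_assoc, ← h1]
  obtain ⟨l, rfl⟩ := List.head?_eq_some_iff.1 hu
  simp only [moved]
  split_ifs <;> simp

theorem bind_ite_singleton {α β : Type*} (s : Multiset α) (q : α → Prop) (h : α → β) :
    (s.bind fun u => if q u then 0 else {h u}) = (s.filter fun u => ¬ q u).map h := by
  induction s using Multiset.induction with
  | empty => simp
  | cons a s ih =>
    by_cases hq : q a
    · simp [ih, hq]
    · simp [ih, hq]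

theorem map_val_eq_of_involutive {f : V → V} (hf : Function.Involutive f)
    (hS : ∀ v ∈ S, f v ∈ S) : S.val.map f = S.val := by
  refine ((S.nodup.map hf.injective).ext S.nodup).2 fun v => ?_
  simp only [Multiset.mem_map, Finset.mem_val]
  exact ⟨by rintro ⟨u, hu, rfl⟩; exact hS u hu, fun hv => ⟨f v, hS v hv, hf v⟩⟩

set_option maxHeartbeats 400000 in
/-- Covers of two disjoint sets combine to a cover of their union when the edges between them
form two matchings, given by involutions `f` and `g`: every path is extended along `f` at its end
and along `g` at its start. -/
theorem Coverable.union_of_involutive (h₁ : IsCover G S₁ M₁) (h₂ : IsCover G S₂ M₂)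
    (hd : Disjoint S₁ S₂) {f g : V → V} (hf : Function.Involutive f) (hg : Function.Involutive g)
    (hfS : ∀ v, f v ≠ v → v ∈ S₁ ∧ f v ∈ S₂ ∨ v ∈ S₂ ∧ f v ∈ S₁)
    (hgS : ∀ v, g v ≠ v → v ∈ S₁ ∧ g v ∈ S₂ ∨ v ∈ S₂ ∧ g v ∈ S₁)
    (hadj : ∀ u ∈ S₁, ∀ v ∈ S₂, G.Adj u v ↔ f u = v ∨ g u = v)
    (hfg : ∀ v, f v ≠ v → f v ≠ g v)
    (hM : ∀ p ∈ M₁ + M₂, ∀ u v, p.head? = some u → p.getLast? = some v →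
      g u ≠ u → f v ≠ v → g u ≠ f v) :
    Coverable G (S₁ ∪ S₂) := by
  have hd' := Finset.disjoint_left.1 hd
  have hval : (S₁ ∪ S₂).val = S₁.val + S₂.val := by
    rw [← Finset.disjUnion_eq_union _ _ hd]; rfl
  have hhead : (M₁ + M₂).map List.head? = (S₁ ∪ S₂).val.map some := by
    rw [hval, Multiset.map_add, Multiset.map_add, h₁.head, h₂.head]
  have hlast : (M₁ + M₂).map List.getLast? = (S₁ ∪ S₂).val.map some := by
    rw [hval, Multiset.map_add, Multiset.map_add, h₁.last, h₂.last]
  have hends : ∀ p ∈ M₁ + M₂, ∃ u v, p.head? = some u ∧ p.getLast? = some v := by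
    intro p hp
    have hne : p ≠ [] := (Multiset.mem_add.1 hp).elim h₁.ne_nil h₂.ne_nil
    exact ⟨p.head hne, p.getLast hne, List.head?_eq_some_head hne,
      List.getLast?_eq_some_getLast hne⟩
  have hclosed : ∀ f : V → V, (∀ v, f v ≠ v → v ∈ S₁ ∧ f v ∈ S₂ ∨ v ∈ S₂ ∧ f v ∈ S₁) →
      ∀ v ∈ S₁ ∪ S₂, f v ∈ S₁ ∪ S₂ := by
    intro f hf v hv
    rw [Finset.mem_union] at hv ⊢
    by_cases h : f v = v
    · rwa [h]
    · have := hf v h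
      tauto
  refine ⟨(M₁ + M₂).map (extend f g), ?_, ?_, ?_, ?_⟩
  · intro q hq
    obtain ⟨p, hp, rfl⟩ := Multiset.mem_map.1 hq
    obtain ⟨u, v, hu, hv⟩ := hends p hp
    have hn : p.Nodup := (Multiset.mem_add.1 hp).elim (h₁.nodup p) (h₂.nodup p)
    have hup : u ∈ p := List.mem_of_head? hu
    have hvp : v ∈ p := List.mem_of_getLast? hv
    have hMp := hM p hp u v hu hv
    have hout : ∀ f : V → V, (∀ v, f v ≠ v → v ∈ S₁ ∧ f v ∈ S₂ ∨ v ∈ S₂ ∧ f v ∈ S₁) →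
        ∀ w ∈ p, f w ≠ w → f w ∉ p := by
      intro f hf w hw hfw hfw'
      have h3 := hf w hfw
      rcases Multiset.mem_add.1 hp with hp | hp
      · have := h₁.subset hp hw
        have := h₁.subset hp hfw'
        grind
      · have := h₂.subset hp hw
        have := h₂.subset hp hfw'
        grind
    have h3 := hout f hfS v hvp
    have h4 := hout g hgS u hup
    rw [extend, hu, hv, moved, moved]
    clear hout hclosed hends hadj hfg hM hfS hgS
    split_ifs <;>
      simp only [List.nil_append, List.append_nil, List.singleton_append, List.nodup_cons,
        List.nodup_append, List.mem_append, List.mem_singleton] <;>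
      grind
  · rw [Multiset.map_map]
    have : ∀ p ∈ M₁ + M₂, (List.head? ∘ extend f g) p = (Option.map g ∘ List.head?) p := by
      intro p hp
      obtain ⟨u, v, hu, hv⟩ := hends p hp
      simp [head?_extend hu, hu]
    rw [Multiset.map_congr rfl this, ← Multiset.map_map, hhead, Multiset.map_map]
    conv_rhs => rw [← map_val_eq_of_involutive hg (hclosed g hgS), Multiset.map_map]
    rfl
  · rw [Multiset.map_map]
    have : ∀ p ∈ M₁ + M₂,
        (List.getLast? ∘ extend f g) p = (Option.map f ∘ List.getLast?) p := by
      intro p hp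
      obtain ⟨u, v, hu, hv⟩ := hends p hp
      simp [getLast?_extend hv, hv]
    rw [Multiset.map_congr rfl this, ← Multiset.map_map, hlast, Multiset.map_map]
    conv_rhs => rw [← map_val_eq_of_involutive hf (hclosed f hfS), Multiset.map_map]
    rfl
  · let inn : Option V → Multiset (V × V) :=
      fun o => o.elim 0 fun u => if g u = u then 0 else {(g u, u)}
    let out : Option V → Multiset (V × V) :=
      fun o => o.elim 0 fun u => if f u = u then 0 else {(u, f u)}
    have : ∀ p ∈ M₁ + M₂, arcs (extend f g p) = inn p.head? + arcs p + out p.getLast? := by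
      intro p hp
      obtain ⟨u, v, hu, hv⟩ := hends p hp
      rw [arcs_extend hu hv, hu, hv]
      rfl
    rw [Multiset.bind_map, Multiset.bind_congr this, Multiset.bind_add, Multiset.bind_add,
      ← Multiset.bind_map (M₁ + M₂) inn List.head?,
      ← Multiset.bind_map (M₁ + M₂) out List.getLast?, hhead, hlast, Multiset.bind_map,
      Multiset.bind_map, Multiset.add_bind, h₁.arcs, h₂.arcs]
    have e1 := bind_ite_singleton (S₁ ∪ S₂).val (fun u => g u = u) (fun u => (g u, u))
    have e2 := bind_ite_singleton (S₁ ∪ S₂).val (fun u => f u = u) (fun u => (u, f u))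
    simp only [inn, out, Option.elim_some, e1, e2]
    have n1 : (((S₁ ∪ S₂).val.filter fun u => ¬ g u = u).map fun u => (g u, u)).Nodup :=
      ((S₁ ∪ S₂).nodup.filter _).map fun _ _ h => (Prod.ext_iff.1 h).2
    have n2 : (((S₁ ∪ S₂).val.filter fun u => ¬ f u = u).map fun u => (u, f u)).Nodup :=
      ((S₁ ∪ S₂).nodup.filter _).map fun _ _ h => (Prod.ext_iff.1 h).1
    refine (Multiset.Nodup.ext ?_ (arcsOn G (S₁ ∪ S₂)).nodup).2 ?_
    · rw [Multiset.nodup_add, Multiset.nodup_add, Multiset.nodup_add]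
      refine ⟨⟨n1, ⟨(arcsOn G S₁).nodup, (arcsOn G S₂).nodup, ?_⟩, ?_⟩, n2, ?_⟩
      all_goals
        rw [Multiset.disjoint_left]
        rintro ⟨a, b⟩ h h'
        simp only [Multiset.mem_add, Multiset.mem_map, Multiset.mem_filter, Finset.mem_val,
          mem_arcsOn, Prod.mk.injEq, Finset.mem_union] at h h'
      · grind
      · obtain ⟨u, ⟨hu, hgu⟩, rfl, rfl⟩ := h
        have := hgS u hgu
        grind
      · obtain ⟨u, ⟨hu, hfu⟩, rfl, rfl⟩ := h'
        have h5 := hfS u hfu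
        have h6 := hfg u hfu
        rcases h with ⟨w, ⟨hw, hgw⟩, h7, h8⟩ | h
        · subst h8
          have := hg (f u)
          rw [h7] at this
          exact h6 this.symm
        · grind
    · rintro ⟨a, b⟩
      simp only [Multiset.mem_add, Multiset.mem_map, Multiset.mem_filter, Finset.mem_val,
          mem_arcsOn, Prod.mk.injEq, Finset.mem_union]
      have hab := fun ha hb => hadj a ha b hb
      have hba := fun hb ha => hadj b hb a ha
      rw [G.adj_comm] at hba
      constructor
      · rintro ((⟨u, ⟨hu, hgu⟩, rfl, rfl⟩ | h) | ⟨u, ⟨hu, hfu⟩, rfl, rfl⟩)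
        · have := hgS u hgu
          have := hg u
          grind
        · tauto
        · have := hfS u hfu
          have := hf u
          grind
      · rintro ⟨ha, hb, h⟩
        rcases ha with ha | ha <;> rcases hb with hb | hb
        · tauto
        · have hne : a ≠ b := h.ne
          rcases (hab ha hb).1 h with h | h
          · exact .inr ⟨a, ⟨.inl ha, fun e => hne (e.symm.trans h)⟩, rfl, h⟩
          · have e : g b = a := by rw [← h, hg]
            exact .inl (.inl ⟨b, ⟨.inr hb, fun e' => hne (e.symm.trans e')⟩, e, rfl⟩)
        · have hne : a ≠ b := h.ne
          rcases (hba hb ha).1 h with h | h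
          · have e : f a = b := by rw [← h, hf]
            exact .inr ⟨a, ⟨.inr ha, fun e' => hne (e'.symm.trans e)⟩, rfl, e⟩
          · exact .inl (.inl ⟨b, ⟨.inl hb, fun e => hne (h.symm.trans e)⟩, h, rfl⟩)
        · tauto

/-- A symmetric functional relation is the graph of an involution. -/
theorem exists_involutive (R : V → V → Prop) (hsymm : ∀ u v, R u v → R v u)
    (hR : ∀ u v w, R u v → R u w → v = w) :
    ∃ f : V → V, Function.Involutive f ∧ (∀ v, f v ≠ v → R v (f v)) ∧ ∀ v w, R v w → f v = w := by
  let f : V → V := fun v => if h : ∃ w, R v w then h.choose else v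
  have h1 : ∀ v w, R v w → f v = w := by
    intro v w h
    have h' : ∃ w, R v w := ⟨w, h⟩
    simp only [f, dif_pos h']
    exact hR _ _ _ h'.choose_spec h
  have h2 : ∀ v, f v ≠ v → R v (f v) := by
    intro v h
    by_cases h' : ∃ w, R v w
    · simp only [f, dif_pos h']
      exact h'.choose_spec
    · simp [f, dif_neg h'] at h
  refine ⟨f, fun v => ?_, h2, h1⟩
  by_cases h : f v = v
  · rw [h, h]
  · exact h1 _ _ (hsymm _ _ (h2 v h))

/-- Two disjoint coverable sets have a coverable union if the edges between them form a
matching. -/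
theorem Coverable.union (h₁ : Coverable G S₁) (h₂ : Coverable G S₂) (hd : Disjoint S₁ S₂)
    (h : ∀ u ∈ S₁, ∀ v ∈ S₂, ∀ w ∈ S₂, G.Adj u v → G.Adj u w → v = w)
    (h' : ∀ u ∈ S₂, ∀ v ∈ S₁, ∀ w ∈ S₁, G.Adj u v → G.Adj u w → v = w) :
    Coverable G (S₁ ∪ S₂) := by
  obtain ⟨M₁, h₁⟩ := h₁
  obtain ⟨M₂, h₂⟩ := h₂
  have hd' := Finset.disjoint_left.1 hd
  obtain ⟨f, hf, hfR, hRf⟩ := exists_involutive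
    (fun u v => G.Adj u v ∧ (u ∈ S₁ ∧ v ∈ S₂ ∨ u ∈ S₂ ∧ v ∈ S₁))
    (fun u v huv => ⟨huv.1.symm, by tauto⟩) (by grind)
  refine Coverable.union_of_involutive h₁ h₂ hd hf (g := id) (fun _ => rfl)
    (fun v hv => (hfR v hv).2) (by simp) ?_ (by simp) (by simp)
  intro u hu v hv
  have huv : u ≠ v := by rintro rfl; exact hd' hu hv
  refine ⟨fun hadj => .inl (hRf u v ⟨hadj, .inl ⟨hu, hv⟩⟩), ?_⟩
  rintro (rfl | rfl)
  · exact (hfR u huv.symm).1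
  · exact absurd rfl huv

theorem nbrs_insert (u v : V) :
    nbrs G (insert u S) v = if G.Adj v u then insert u (nbrs G S v) else nbrs G S v :=
  Finset.filter_insert _ _ _

theorem nbrs_singleton (u v : V) :
    nbrs G {u} v = if G.Adj v u then {u} else ∅ :=
  Finset.filter_singleton _ _

theorem arcsOn_empty : arcsOn G ∅ = ∅ := rfl

theorem arcsOn_singleton (u : V) : arcsOn G {u} = ∅ := by
  ext ⟨a, b⟩
  simp only [mem_arcsOn, Finset.mem_singleton, Finset.notMem_empty, iff_false]
  rintro ⟨rfl, rfl, h⟩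
  exact h.ne rfl

theorem coverable_singleton (u : V) : Coverable G {u} :=
  ⟨{[u]}, by simp, by simp, by simp, by simp [arcsOn_singleton]⟩

theorem isCover_complete_four {a b c x : V} (hab : G.Adj a b) (hac : G.Adj a c)
    (hax : G.Adj a x) (hbc : G.Adj b c) (hbx : G.Adj b x) (hcx : G.Adj c x) :
    IsCover G {a, b, c, x} {[a, b, c, x], [b, x, a, c], [c, a, x, b], [x, c, b, a]} := by
  have := hab.ne; have := hac.ne; have := hax.ne; have := hbc.ne; have := hbx.ne; have := hcx.ne
  refine ⟨?_, ?_, ?_, ?_⟩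
  · simp only [Multiset.insert_eq_cons, Multiset.mem_cons, Multiset.mem_singleton]
    rintro p (rfl | rfl | rfl | rfl) <;> grind
  · simp [*]
  · simp [← Multiset.singleton_add, *]
    abel
  · simp [arcsOn_insert, nbrs_insert, nbrs_singleton, arcsOn_singleton,
      ← Multiset.singleton_add, *]
    abel

theorem coverable_cycle_four {x a y b : V} (hxa : G.Adj x a) (hay : G.Adj a y)
    (hyb : G.Adj y b) (hbx : G.Adj x b) (hxy : ¬ G.Adj x y) (hab : ¬ G.Adj a b) (hxy' : x ≠ y)
    (hab' : a ≠ b) : Coverable G {x, a, y, b} := by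
  have := hxa.ne; have := hay.ne; have := hyb.ne; have := hbx.ne
  refine ⟨{[x, a], [a, y, b, x], [y, a, x, b], [b, y]}, ?_, ?_, ?_, ?_⟩
  · simp only [Multiset.insert_eq_cons, Multiset.mem_cons, Multiset.mem_singleton]
    rintro p (rfl | rfl | rfl | rfl) <;> grind
  · simp [*]
  · simp [← Multiset.singleton_add, *]
    abel
  · simp [arcsOn_insert, nbrs_insert, nbrs_singleton, arcsOn_singleton,
      ← Multiset.singleton_add, *]
    abel

theorem coverable_diamond {q p r y : V} (hqp : G.Adj q p) (hqr : G.Adj q r)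
    (hpr : G.Adj p r) (hpy : G.Adj p y) (hry : G.Adj r y) (hqy : ¬ G.Adj q y) (hqy' : q ≠ y) :
    Coverable G {q, p, r, y} := by
  have := hqp.ne; have := hqr.ne; have := hpr.ne; have := hpy.ne; have := hry.ne
  refine ⟨{[q, p, r, y], [p, y, r, q], [r, p], [y, p, q, r]}, ?_, ?_, ?_, ?_⟩
  · simp only [Multiset.insert_eq_cons, Multiset.mem_cons, Multiset.mem_singleton]
    rintro p (rfl | rfl | rfl | rfl) <;> grind
  · simp [*]
  · simp [← Multiset.singleton_add, *]
    abel
  · simp [arcsOn_insert, nbrs_insert, nbrs_singleton, arcsOn_singleton,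
      ← Multiset.singleton_add, *]
    abel

theorem coverable_complete_five_sub {x a b c d : V} (hxa : G.Adj x a) (hxb : G.Adj x b)
    (hxc : G.Adj x c) (hab : G.Adj a b) (hac : G.Adj a c) (hbc : G.Adj b c) (had : G.Adj a d)
    (hbd : G.Adj b d) (hcd : G.Adj c d) (hxd : ¬ G.Adj x d) (hxd' : x ≠ d) :
    Coverable G {x, a, b, c, d} := by
  have := hxa.ne; have := hxb.ne; have := hxc.ne; have := hab.ne; have := hac.ne; have := hbc.ne
  have := had.ne; have := hbd.ne; have := hcd.ne
  refine ⟨{[x, a, b, c], [a, c, b, d], [b, a, d, c, x], [c, d, a, x, b], [d, b, x, c, a]},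
    ?_, ?_, ?_, ?_⟩
  · simp only [Multiset.insert_eq_cons, Multiset.mem_cons, Multiset.mem_singleton]
    rintro p (rfl | rfl | rfl | rfl | rfl) <;> grind
  · simp [*]
  · simp [← Multiset.singleton_add, *]
    abel
  · simp [arcsOn_insert, nbrs_insert, nbrs_singleton, arcsOn_singleton,
      ← Multiset.singleton_add, *]
    abel

/-- The vertices `u`, `v`, `w` span a connected component of the subgraph induced by `S`, and
this component is a triangle. -/
structure IsolatedTriangle (G : SimpleGraph V) (S : Finset V) (u v w : V) : Prop where
  mem₁ : u ∈ S
  mem₂ : v ∈ S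
  mem₃ : w ∈ S
  adj₁₂ : G.Adj u v
  adj₁₃ : G.Adj u w
  adj₂₃ : G.Adj v w
  nbr₁ : ∀ y ∈ S, G.Adj u y → y = v ∨ y = w
  nbr₂ : ∀ y ∈ S, G.Adj v y → y = u ∨ y = w
  nbr₃ : ∀ y ∈ S, G.Adj w y → y = u ∨ y = v

theorem IsolatedTriangle.rotate {u v w : V} (h : IsolatedTriangle G S u v w) :
    IsolatedTriangle G S v w u :=
  ⟨h.mem₂, h.mem₃, h.mem₁, h.adj₂₃, h.adj₁₂.symm, h.adj₁₃.symm,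
    fun y hy hv => (h.nbr₂ y hy hv).symm, fun y hy hw => (h.nbr₃ y hy hw).symm, h.nbr₁⟩

theorem IsolatedTriangle.swap {u v w : V} (h : IsolatedTriangle G S u v w) :
    IsolatedTriangle G S u w v :=
  ⟨h.mem₁, h.mem₃, h.mem₂, h.adj₁₃, h.adj₁₂, h.adj₂₃.symm,
    fun y hy hv => (h.nbr₁ y hy hv).symm, h.nbr₃, h.nbr₂⟩

theorem IsolatedTriangle.exists_third {u v w a b : V} (h : IsolatedTriangle G S u v w)
    (ha : a = u ∨ a = v ∨ a = w) (hb : b ∈ S) (hab : G.Adj a b) :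
    ∃ y, IsolatedTriangle G S a b y := by
  rcases ha with rfl | rfl | rfl
  · rcases h.nbr₁ b hb hab with rfl | rfl
    exacts [⟨_, h⟩, ⟨_, h.swap⟩]
  · rcases h.nbr₂ b hb hab with rfl | rfl
    exacts [⟨_, h.rotate.swap⟩, ⟨_, h.rotate⟩]
  · rcases h.nbr₃ b hb hab with rfl | rfl
    exacts [⟨_, h.rotate.rotate⟩, ⟨_, h.rotate.rotate.swap⟩]

/-- The subgraph induced by `S` has maximum degree at most four, has no subgraph of
minimum degree four, and has no component that is a triangle. -/
structure Sparse (G : SimpleGraph V) (S : Finset V) : Prop where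
  deg : ∀ v ∈ S, (nbrs G S v).card ≤ 4
  exists_le : ∀ T ⊆ S, T.Nonempty → ∃ v ∈ T, (nbrs G T v).card ≤ 3
  not_triangle : ∀ u v w, ¬ IsolatedTriangle G S u v w

theorem nbrs_mono (h : T ⊆ S) (v : V) : nbrs G T v ⊆ nbrs G S v :=
  Finset.filter_subset_filter _ h

theorem Sparse.subset (hS : Sparse G S) (h : T ⊆ S)
    (hT : ∀ u v w, ¬ IsolatedTriangle G T u v w) : Sparse G T :=
  ⟨fun v hv => (Finset.card_le_card (nbrs_mono h v)).trans (hS.deg v (h hv)),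
    fun U hU => hS.exists_le U (hU.trans h), hT⟩

theorem nbrs_erase_self (x : V) : nbrs G (S.erase x) x = nbrs G S x := by
  ext y
  simp only [mem_nbrs, Finset.mem_erase]
  exact ⟨fun h => ⟨h.1.2, h.2⟩, fun h => ⟨⟨h.2.ne', h.1⟩, h.2⟩⟩

theorem Coverable.of_sdiff (hTS : T ⊆ S) (hT : Coverable G T) (hST : Coverable G (S \ T))
    (h : ∀ u ∈ T, ∀ v ∈ S \ T, ∀ w ∈ S \ T, G.Adj u v → G.Adj u w → v = w)
    (h' : ∀ u ∈ S \ T, ∀ v ∈ T, ∀ w ∈ T, G.Adj u v → G.Adj u w → v = w) : Coverable G S := by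
  rw [← Finset.union_sdiff_of_subset hTS]
  exact hT.union hST Finset.disjoint_sdiff h h'

/-- All sparse sets smaller than `S` are coverable, in any graph on the same vertices. -/
def SmallerCoverable (S : Finset V) : Prop :=
  ∀ (G : SimpleGraph V) (T : Finset V), T.card < S.card → Sparse G T → Coverable G T

theorem SmallerCoverable.of_closed (ih : SmallerCoverable S) (hS : Sparse G S) (hTS : T ⊆ S)
    (hne : T.Nonempty) (hT : Coverable G T) (hcl : ∀ u ∈ T, ∀ v ∈ S, G.Adj u v → v ∈ T) :
    Coverable G S := by
  refine hT.of_sdiff hTS (ih G _ ?_ (hS.subset Finset.sdiff_subset ?_)) ?_ ?_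
  · exact Finset.card_lt_card (Finset.sdiff_ssubset hTS hne)
  · intro u v w h
    have hmem : ∀ z ∈ S \ T, ∀ y ∈ S, G.Adj z y → y ∈ S \ T := by
      intro z hz y hy hzy
      rw [Finset.mem_sdiff] at hz ⊢
      exact ⟨hy, fun hyT => hz.2 (hcl y hyT z hz.1 hzy.symm)⟩
    have h1 := h.mem₁
    have h2 := h.mem₂
    have h3 := h.mem₃
    exact hS.not_triangle u v w
      { h with
        mem₁ := (Finset.mem_sdiff.1 h1).1
        mem₂ := (Finset.mem_sdiff.1 h2).1
        mem₃ := (Finset.mem_sdiff.1 h3).1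
        nbr₁ := fun y hy hadj => h.nbr₁ y (hmem _ h1 y hy hadj) hadj
        nbr₂ := fun y hy hadj => h.nbr₂ y (hmem _ h2 y hy hadj) hadj
        nbr₃ := fun y hy hadj => h.nbr₃ y (hmem _ h3 y hy hadj) hadj }
  · intro u hu v hv _ _ huv
    rw [Finset.mem_sdiff] at hv
    exact absurd (hcl u hu v hv.1 huv) hv.2
  · intro u hu v hv _ _ huv
    rw [Finset.mem_sdiff] at hu
    exact absurd (hcl v hv u hu.1 huv.symm) hu.2

/-- A vertex of degree two whose neighbours are adjacent. -/
theorem SmallerCoverable.of_triangle (ih : SmallerCoverable S) (hS : Sparse G S) {q p r : V}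
    (hq : q ∈ S) (hn : nbrs G S q = {p, r}) (hpr : G.Adj p r) : Coverable G S := by
  have hqn : ∀ y, y ∈ S ∧ G.Adj q y ↔ y = p ∨ y = r := by
    intro y; rw [← mem_nbrs, hn]; simp
  obtain ⟨hp, hqp⟩ := (hqn p).2 (.inl rfl)
  obtain ⟨hr, hqr⟩ := (hqn r).2 (.inr rfl)
  by_cases h : ∃ u v w, IsolatedTriangle G (S.erase q) u v w
  · obtain ⟨y, h⟩ : ∃ y, IsolatedTriangle G (S.erase q) p r y := by
      obtain ⟨u, v, w, h⟩ := h
      by_cases hpuvw : p = u ∨ p = v ∨ p = w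
      · exact h.exists_third hpuvw (Finset.mem_erase.2 ⟨hqr.ne', hr⟩) hpr
      by_cases hruvw : r = u ∨ r = v ∨ r = w
      · obtain ⟨y, hy⟩ := h.exists_third hruvw (Finset.mem_erase.2 ⟨hqp.ne', hp⟩) hpr.symm
        exact ⟨y, hy.rotate.swap⟩
      exfalso
      have hmem : ∀ z ∈ S.erase q, z = u ∨ z = v ∨ z = w → ∀ y ∈ S, G.Adj z y →
          y ∈ S.erase q := by
        intro z hz hzu y hy hzy
        refine Finset.mem_erase.2 ⟨?_, hy⟩
        rintro rfl
        have := (hqn z).1 ⟨(Finset.mem_erase.1 hz).2, hzy.symm⟩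
        grind
      have h1 := h.mem₁
      have h2 := h.mem₂
      have h3 := h.mem₃
      exact hS.not_triangle u v w
        { h with
          mem₁ := (Finset.mem_erase.1 h1).2
          mem₂ := (Finset.mem_erase.1 h2).2
          mem₃ := (Finset.mem_erase.1 h3).2
          nbr₁ := fun y hy hadj => h.nbr₁ y (hmem _ h1 (by simp) y hy hadj) hadj
          nbr₂ := fun y hy hadj => h.nbr₂ y (hmem _ h2 (by simp) y hy hadj) hadj
          nbr₃ := fun y hy hadj => h.nbr₃ y (hmem _ h3 (by simp) y hy hadj) hadj }
    obtain ⟨hyq, hy⟩ := Finset.mem_erase.1 h.mem₃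
    have hqy : ¬ G.Adj q y := by
      intro hqy
      rcases (hqn y).1 ⟨hy, hqy⟩ with rfl | rfl
      exacts [h.adj₁₃.ne rfl, h.adj₂₃.ne rfl]
    refine ih.of_closed hS (T := {q, p, r, y}) ?_ ⟨q, by simp⟩
      (coverable_diamond hqp hqr hpr h.adj₁₃ h.adj₂₃ hqy hyq.symm) ?_
    · intro z
      simp only [Finset.mem_insert, Finset.mem_singleton]
      rintro (rfl | rfl | rfl | rfl) <;> assumption
    · intro u hu v hv huv
      have h1 := h.nbr₁ v
      have h2 := h.nbr₂ v
      have h3 := h.nbr₃ v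
      have h4 := hqn v
      simp only [Finset.mem_insert, Finset.mem_singleton, Finset.mem_erase] at *
      grind
  · push Not at h
    have hcov := ih G (S.erase q) (Finset.card_erase_lt_of_mem hq) (hS.subset (S.erase_subset q) h)
    have hex : ∃ y ∈ S, y ≠ q ∧ (G.Adj p y ∧ y ≠ r ∨ G.Adj r y ∧ y ≠ p) := by
      by_contra! hex
      refine hS.not_triangle q p r ⟨hq, hp, hr, hqp, hqr, hpr, fun y hy hqy => (hqn y).1 ⟨hy, hqy⟩,
        ?_, ?_⟩
      all_goals
        intro y hy hpy
        have := hex y hy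
        grind
    rw [← Finset.insert_erase hq]
    obtain ⟨y, hy, hyq, ⟨hpy, hyr⟩ | ⟨hry, hyp⟩⟩ := hex
    · exact hcov.insert_two (S.notMem_erase q) hpr.ne (by rw [nbrs_erase_self, hn])
        (Finset.mem_erase.2 ⟨hqr.ne', hr⟩) (Finset.mem_erase.2 ⟨hyq, hy⟩) hyr.symm hpr.symm hpy.symm
    · exact hcov.insert_two (S.notMem_erase q) hpr.ne'
        (by rw [nbrs_erase_self, hn, Finset.pair_comm])
        (Finset.mem_erase.2 ⟨hqp.ne', hp⟩) (Finset.mem_erase.2 ⟨hyq, hy⟩) hyp.symm hpr hry.symm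

/-- No vertex of degree two lies in a triangle. -/
def NoTriangleTip (G : SimpleGraph V) (S : Finset V) : Prop :=
  ∀ q ∈ S, ∀ p r, nbrs G S q = {p, r} → ¬ G.Adj p r

theorem IsolatedTriangle.exists_adj (hS : NoTriangleTip G S) (hTS : T ⊆ S) {u v w : V}
    (h : IsolatedTriangle G T u v w) : ∃ y ∈ S, y ∉ T ∧ G.Adj u y := by
  by_contra! hy
  refine hS u (hTS h.mem₁) v w ?_ h.adj₂₃
  ext y
  simp only [mem_nbrs, Finset.mem_insert, Finset.mem_singleton]
  constructor
  · rintro ⟨hyS, huy⟩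
    exact h.nbr₁ y (by_contra fun hyT => hy y hyS hyT huy) huy
  · rintro (rfl | rfl)
    exacts [⟨hTS h.mem₂, h.adj₁₂⟩, ⟨hTS h.mem₃, h.adj₁₃⟩]

/-- A vertex of degree at most one. -/
theorem SmallerCoverable.of_leaf (ih : SmallerCoverable S) (hS : Sparse G S)
    (hA : NoTriangleTip G S) {x : V} (hx : x ∈ S) (hn : (nbrs G S x).card ≤ 1) :
    Coverable G S := by
  have hn' : ∀ u ∈ S, ∀ v ∈ S, G.Adj x u → G.Adj x v → u = v := fun u hu v hv hxu hxv =>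
    Finset.card_le_one.1 hn u (mem_nbrs.2 ⟨hu, hxu⟩) v (mem_nbrs.2 ⟨hv, hxv⟩)
  refine (coverable_singleton x).of_sdiff (by simpa using hx)
    (ih G _ (Finset.card_lt_card (Finset.sdiff_ssubset (by simpa using hx) ⟨x, by simp⟩))
      (hS.subset Finset.sdiff_subset ?_)) ?_ ?_
  · intro u v w h
    obtain ⟨y, hy, hyT, huy⟩ := h.exists_adj hA Finset.sdiff_subset
    obtain ⟨z, hz, hzT, hvz⟩ := h.rotate.exists_adj hA Finset.sdiff_subset
    obtain rfl : y = x := by simpa [hy] using hyT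
    obtain rfl : z = y := by simpa [hz] using hzT
    exact h.adj₁₂.ne (hn' u (Finset.mem_sdiff.1 h.mem₁).1 v (Finset.mem_sdiff.1 h.mem₂).1
      huy.symm hvz.symm)
  · simp only [Finset.mem_singleton, Finset.mem_sdiff]
    rintro u rfl v ⟨hv, -⟩ w ⟨hw, -⟩
    exact hn' v hv w hw
  · simp only [Finset.mem_singleton]
    rintro u - v rfl w rfl - -
    rfl

theorem nbrs_addEdge_left {a b : V} (hab : a ≠ b) :
    nbrs (addEdge G a b) S a ⊆ insert b (nbrs G S a) := by
  intro y
  simp only [mem_nbrs, addEdge_adj hab, Finset.mem_insert]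
  tauto

theorem nbrs_addEdge_right {a b : V} (hab : a ≠ b) :
    nbrs (addEdge G a b) S b ⊆ insert a (nbrs G S b) := by
  intro y
  simp only [mem_nbrs, addEdge_adj hab, Finset.mem_insert]
  tauto

theorem nbrs_addEdge_of_ne {a b v : V} (hab : a ≠ b) (hva : v ≠ a) (hvb : v ≠ b) :
    nbrs (addEdge G a b) S v = nbrs G S v := by
  ext y
  simp [mem_nbrs, addEdge_adj hab, hva, hvb]

theorem nbrs_erase (x v : V) : nbrs G (S.erase x) v = (nbrs G S v).erase x := by
  ext y
  simp only [mem_nbrs, Finset.mem_erase]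
  tauto

theorem card_nbrs_addEdge_erase_le {a b x : V} (hab : a ≠ b) (hx : x ∈ S) (hxa : G.Adj x a)
    (hxb : G.Adj x b) (v : V) :
    (nbrs (addEdge G a b) (S.erase x) v).card ≤ (nbrs G S v).card := by
  have key : ∀ v c, G.Adj x v → (insert c ((nbrs G S v).erase x)).card ≤ (nbrs G S v).card := by
    intro v c hxv
    have hxn : x ∈ nbrs G S v := mem_nbrs.2 ⟨hx, hxv.symm⟩
    exact (Finset.card_insert_le _ _).trans (Finset.card_erase_add_one hxn).le
  by_cases hva : v = a
  · subst hva
    refine (Finset.card_le_card (nbrs_addEdge_left hab)).trans ?_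
    rw [nbrs_erase]
    exact key v b hxa
  by_cases hvb : v = b
  · subst hvb
    refine (Finset.card_le_card (nbrs_addEdge_right hab)).trans ?_
    rw [nbrs_erase]
    exact key v a hxb
  rw [nbrs_addEdge_of_ne hab hva hvb]
  exact Finset.card_le_card (nbrs_mono (S.erase_subset x) v)

theorem IsolatedTriangle.of_addEdge {a b u v w : V} (hab : a ≠ b) (ha : a ∈ S) (hb : b ∈ S)
    (h : IsolatedTriangle (addEdge G a b) S u v w) :
    (∃ y, IsolatedTriangle (addEdge G a b) S a b y) ∨ IsolatedTriangle G S u v w := by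
  have hadj : (addEdge G a b).Adj a b := (addEdge_adj hab).2 (by simp)
  by_cases hau : a = u ∨ a = v ∨ a = w
  · exact .inl (h.exists_third hau hb hadj)
  by_cases hbu : b = u ∨ b = v ∨ b = w
  · obtain ⟨y, hy⟩ := h.exists_third hbu ha hadj.symm
    exact .inl ⟨y, hy.rotate.swap⟩
  right
  have key : ∀ z, z = u ∨ z = v ∨ z = w → ∀ y, (addEdge G a b).Adj z y ↔ G.Adj z y := by
    intro z hz y
    rw [addEdge_adj hab]
    grind
  obtain ⟨h1, h2, h3, h4, h5, h6, h7, h8, h9⟩ := h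
  simp only [key u (by simp), key v (by simp), key w (by simp)] at h4 h5 h6 h7 h8 h9
  exact ⟨h1, h2, h3, h4, h5, h6, h7, h8, h9⟩

/-- A vertex of degree two. -/
theorem SmallerCoverable.of_degree_two (ih : SmallerCoverable S) (hS : Sparse G S)
    (hA : NoTriangleTip G S) {x a b : V} (hx : x ∈ S) (hab : a ≠ b) (hn : nbrs G S x = {a, b}) :
    Coverable G S := by
  have hxn : ∀ y, y ∈ S ∧ G.Adj x y ↔ y = a ∨ y = b := by
    intro y; rw [← mem_nbrs, hn]; simp
  have hG := hA x hx a b hn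
  obtain ⟨ha, hxa⟩ := (hxn a).2 (.inl rfl)
  obtain ⟨hb, hxb⟩ := (hxn b).2 (.inr rfl)
  have ha' : a ∈ S.erase x := Finset.mem_erase.2 ⟨hxa.ne', ha⟩
  have hb' : b ∈ S.erase x := Finset.mem_erase.2 ⟨hxb.ne', hb⟩
  have hlt := Finset.card_erase_lt_of_mem hx
  have htri : ∀ u v w, ¬ IsolatedTriangle G (S.erase x) u v w := by
    intro u v w h
    have hu := h.exists_adj hA (S.erase_subset x)
    have hv := h.rotate.exists_adj hA (S.erase_subset x)
    have hw := h.rotate.rotate.exists_adj hA (S.erase_subset x)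
    have key : ∀ z ∈ S.erase x, (∃ y ∈ S, y ∉ S.erase x ∧ G.Adj z y) → z = a ∨ z = b := by
      rintro z hz ⟨y, hy, hyx, hzy⟩
      obtain rfl : y = x := by simpa [hy] using hyx
      exact (hxn z).1 ⟨(Finset.mem_erase.1 hz).2, hzy.symm⟩
    have := key u h.mem₁ hu
    have := key v h.mem₂ hv
    have := key w h.mem₃ hw
    have := h.adj₁₂.ne
    have := h.adj₁₃.ne
    have := h.adj₂₃.ne
    grind
  rw [← Finset.insert_erase hx]
  by_cases hda : 1 < (nbrs G (S.erase x) a).card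
  · obtain ⟨u, hu, w, hw, huw⟩ := Finset.one_lt_card.1 hda
    rw [mem_nbrs] at hu hw
    exact (ih G _ hlt (hS.subset (S.erase_subset x) htri)).insert_two (S.notMem_erase x) hab
      (by rw [nbrs_erase_self, hn]) hu.1 hw.1 huw hu.2.symm hw.2.symm
  by_cases hdb : 1 < (nbrs G (S.erase x) b).card
  · obtain ⟨u, hu, w, hw, huw⟩ := Finset.one_lt_card.1 hdb
    rw [mem_nbrs] at hu hw
    exact (ih G _ hlt (hS.subset (S.erase_subset x) htri)).insert_two (S.notMem_erase x) hab.symm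
      (by rw [nbrs_erase_self, hn, Finset.pair_comm]) hu.1 hw.1 huw hu.2.symm hw.2.symm
  by_cases h : ∃ y, IsolatedTriangle (addEdge G a b) (S.erase x) a b y
  · obtain ⟨y, h⟩ := h
    have hay := h.adj₁₃
    have hby := h.adj₂₃
    have hyx := (Finset.mem_erase.1 h.mem₃).1
    have hy := (Finset.mem_erase.1 h.mem₃).2
    have hya := hay.ne'
    have hyb := hby.ne'
    rw [addEdge_adj hab] at hay hby
    rw [Finset.insert_erase hx]
    refine ih.of_closed hS (T := {x, a, y, b}) ?_ ⟨x, by simp⟩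
      (coverable_cycle_four hxa (by tauto) (by rw [G.adj_comm]; tauto) hxb ?_ hG hyx.symm hab) ?_
    · intro z
      simp only [Finset.mem_insert, Finset.mem_singleton]
      rintro (rfl | rfl | rfl | rfl) <;> assumption
    · intro hxy
      have := (hxn y).1 ⟨hy, hxy⟩
      tauto
    · intro u hu v hv huv
      have h1 := h.nbr₁ v
      have h2 := h.nbr₂ v
      have h3 := h.nbr₃ v
      have h4 := hxn v
      simp only [Finset.mem_insert, Finset.mem_singleton, Finset.mem_erase, addEdge_adj hab] at *
      grind
  · refine (ih _ _ hlt ⟨?_, ?_, ?_⟩).subdivide (S.notMem_erase x) hab hG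
      (by rw [nbrs_erase_self, hn])
    · exact fun v hv => (card_nbrs_addEdge_erase_le hab hx hxa hxb v).trans
        (hS.deg v (Finset.mem_erase.1 hv).2)
    · intro T hT hne
      by_cases haT : a ∈ T
      · refine ⟨a, haT, ?_⟩
        have h1 := Finset.card_le_card (nbrs_addEdge_left (G := G) (S := T) hab)
        have h2 := Finset.card_insert_le b (nbrs G T a)
        have h3 := Finset.card_le_card (nbrs_mono (G := G) hT a)
        omega
      by_cases hbT : b ∈ T
      · refine ⟨b, hbT, ?_⟩
        have h1 := Finset.card_le_card (nbrs_addEdge_right (G := G) (S := T) hab)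
        have h2 := Finset.card_insert_le a (nbrs G T b)
        have h3 := Finset.card_le_card (nbrs_mono (G := G) hT b)
        omega
      obtain ⟨v, hv, hcard⟩ := hS.exists_le T (hT.trans (S.erase_subset x)) hne
      refine ⟨v, hv, ?_⟩
      rwa [nbrs_addEdge_of_ne hab (by rintro rfl; exact haT hv) (by rintro rfl; exact hbT hv)]
    · intro u v w huvw
      exact (huvw.of_addEdge hab ha' hb').elim h (htri u v w)

theorem noTriangleTip_of_three_le (hmin : ∀ v ∈ S, 3 ≤ (nbrs G S v).card) :
    NoTriangleTip G S := by
  intro q hq p r hn _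
  have := hmin q hq
  rw [hn] at this
  have := Finset.card_le_two (a := p) (b := r)
  omega

/-- In a graph of minimum degree at least three, a vertex of degree three with two nonadjacent
neighbours. -/
theorem SmallerCoverable.of_degree_three (ih : SmallerCoverable S) (hS : Sparse G S)
    (hmin : ∀ v ∈ S, 3 ≤ (nbrs G S v).card) {x a b c : V} (hx : x ∈ S) (hab : a ≠ b)
    (hac : a ≠ c) (hbc : b ≠ c) (hn : nbrs G S x = {a, b, c}) (hG : ¬ G.Adj a b) :
    Coverable G S := by
  have hA := noTriangleTip_of_three_le hmin
  have hxn : ∀ y, y ∈ S ∧ G.Adj x y ↔ y = a ∨ y = b ∨ y = c := by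
    intro y; rw [← mem_nbrs, hn]; simp
  obtain ⟨ha, hxa⟩ := (hxn a).2 (.inl rfl)
  obtain ⟨hb, hxb⟩ := (hxn b).2 (.inr (.inl rfl))
  obtain ⟨hc, hxc⟩ := (hxn c).2 (.inr (.inr rfl))
  have ha' : a ∈ S.erase x := Finset.mem_erase.2 ⟨hxa.ne', ha⟩
  have hb' : b ∈ S.erase x := Finset.mem_erase.2 ⟨hxb.ne', hb⟩
  have hadj : (addEdge G a b).Adj a b := (addEdge_adj hab).2 (by simp)
  have hcn : (nbrs G (S.erase x) c).card + 1 = (nbrs G S c).card := by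
    rw [nbrs_erase, Finset.card_erase_add_one (mem_nbrs.2 ⟨hx, hxc.symm⟩)]
  have hdeg := fun v (hv : v ∈ S) =>
    (card_nbrs_addEdge_erase_le hab hx hxa hxb v).trans (hS.deg v hv)
  have hlt := Finset.card_erase_lt_of_mem hx
  by_cases h : ∀ U ⊆ S.erase x, U.Nonempty → ∃ v ∈ U, (nbrs (addEdge G a b) U v).card ≤ 3
  · have hcov : Coverable (addEdge G a b) (S.erase x) := by
      refine ih _ _ hlt ⟨fun v hv => hdeg v (Finset.mem_erase.1 hv).2, h, ?_⟩
      intro u v w huvw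
      rcases huvw.of_addEdge hab ha' hb' with ⟨y, hy⟩ | h
      · have hsub : nbrs G S a ⊆ {x, y} := by
          intro z hz
          rw [mem_nbrs] at hz
          have := hy.nbr₁ z
          simp only [Finset.mem_insert, Finset.mem_singleton, Finset.mem_erase,
            addEdge_adj hab] at *
          grind
        have h1 := Finset.card_le_card hsub
        have h2 := hmin a ha
        have h3 := Finset.card_le_two (a := x) (b := y)
        omega
      · have key : ∀ z ∈ S.erase x, (∃ y ∈ S, y ∉ S.erase x ∧ G.Adj z y) →
            z = a ∨ z = b ∨ z = c := by
          rintro z hz ⟨y, hy, hyx, hzy⟩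
          obtain rfl : y = x := by simpa [hy] using hyx
          exact (hxn z).1 ⟨(Finset.mem_erase.1 hz).2, hzy.symm⟩
        have h1 := key u h.mem₁ (h.exists_adj hA (S.erase_subset x))
        have h2 := key v h.mem₂ (h.rotate.exists_adj hA (S.erase_subset x))
        have h3 := key w h.mem₃ (h.rotate.rotate.exists_adj hA (S.erase_subset x))
        obtain ⟨-, -, -, h4, h5, h6, -, -, -⟩ := h
        have := h4.ne
        have := h5.ne
        have := h6.ne
        have := h4.symm
        have := h5.symm
        have := h6.symm
        grind
    have h1 : 1 < (nbrs G (S.erase x) c).card := by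
      have := hmin c hc
      omega
    obtain ⟨u, hu, w, hw, huw⟩ := Finset.one_lt_card.1 h1
    rw [mem_nbrs] at hu hw
    rw [← Finset.insert_erase hx]
    exact hcov.subdivide_join (S.notMem_erase x) hab hac hbc hG (by rw [nbrs_erase_self, hn])
      hu.1 hw.1 huw hu.2.symm hw.2.symm
  · push Not at h
    obtain ⟨U, hU, hne, hUcard⟩ := h
    have hclosed : ∀ v ∈ U, ∀ y ∈ S.erase x, (addEdge G a b).Adj v y → y ∈ U := by
      intro v hv y hy hvy
      have heq := Finset.eq_of_subset_of_card_le (nbrs_mono (G := addEdge G a b) hU v)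
        ((hdeg v (Finset.mem_erase.1 (hU hv)).2).trans (hUcard v hv))
      exact (mem_nbrs.1 (heq ▸ mem_nbrs.2 ⟨hy, hvy⟩)).1
    have habU : a ∈ U ∨ b ∈ U := by
      by_contra! hab'
      obtain ⟨v, hv, hcard⟩ := hS.exists_le U (hU.trans (S.erase_subset x)) hne
      have := hUcard v hv
      rw [nbrs_addEdge_of_ne hab (by rintro rfl; exact hab'.1 hv)
        (by rintro rfl; exact hab'.2 hv)] at this
      omega
    have haU : a ∈ U := habU.elim id fun h => hclosed b h a ha' hadj.symm
    have hbU : b ∈ U := hclosed a haU b hb' hadj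
    have hcU : c ∉ U := by
      intro hcU
      have h1 := hUcard c hcU
      rw [nbrs_addEdge_of_ne hab hac.symm hbc.symm] at h1
      have h2 := Finset.card_le_card (nbrs_mono (G := G) hU c)
      have h3 := hS.deg c hc
      omega
    have hxU : x ∉ U := fun h => (Finset.mem_erase.1 (hU h)).1 rfl
    have hsub : insert x U ⊆ S := Finset.insert_subset hx (hU.trans (S.erase_subset x))
    have hcross : ∀ u ∈ insert x U, ∀ v ∈ S, v ∉ insert x U → G.Adj u v → u = x ∧ v = c := by
      intro u hu v hv hvU huv
      rw [Finset.mem_insert] at hu hvU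
      have h1 := hclosed u
      have h2 := hxn v
      simp only [addEdge_adj hab, Finset.mem_erase] at h1
      grind
    have hcS : c ∈ S \ insert x U := by
      simp [hc, hcU, hxc.ne']
    refine Coverable.of_sdiff hsub (ih G _ (Finset.card_lt_card ?_) (hS.subset hsub ?_))
      (ih G _ (Finset.card_lt_card (Finset.sdiff_ssubset hsub ⟨x, by simp⟩))
        (hS.subset Finset.sdiff_subset ?_)) ?_ ?_
    · exact (Finset.ssubset_iff_of_subset hsub).2 ⟨c, Finset.mem_sdiff.1 hcS⟩
    · intro u v w h
      obtain ⟨y, hy, hyT, huy⟩ := h.exists_adj hA hsub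
      obtain ⟨z, hz, hzT, hvz⟩ := h.rotate.exists_adj hA hsub
      exact h.adj₁₂.ne ((hcross u h.mem₁ y hy hyT huy).1.trans
        (hcross v h.mem₂ z hz hzT hvz).1.symm)
    · intro u v w h
      obtain ⟨y, hy, hyT, huy⟩ := h.exists_adj hA Finset.sdiff_subset
      obtain ⟨z, hz, hzT, hvz⟩ := h.rotate.exists_adj hA Finset.sdiff_subset
      have hout : ∀ y ∈ S, y ∉ S \ insert x U → y ∈ insert x U := fun y hy hyT =>
        by_contra fun h => hyT (Finset.mem_sdiff.2 ⟨hy, h⟩)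
      have h1 := Finset.mem_sdiff.1 h.mem₁
      have h2 := Finset.mem_sdiff.1 h.mem₂
      exact h.adj₁₂.ne ((hcross y (hout y hy hyT) u h1.1 h1.2 huy.symm).2.trans
        (hcross z (hout z hz hzT) v h2.1 h2.2 hvz.symm).2.symm)
    · intro u hu v hv w hw huv huw
      rw [Finset.mem_sdiff] at hv hw
      exact (hcross u hu v hv.1 hv.2 huv).2.trans (hcross u hu w hw.1 hw.2 huw).2.symm
    · intro u hu v hv w hw huv huw
      rw [Finset.mem_sdiff] at hu
      exact (hcross v hv u hu.1 hu.2 huv.symm).1.trans (hcross w hw u hu.1 hu.2 huw.symm).1.symm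

/-- A vertex with three known neighbours has at most one further neighbour. -/
theorem Sparse.eq_of_adj (hS : Sparse G S) {z p q r u v : V} (hz : z ∈ S) (hp : p ∈ S)
    (hq : q ∈ S) (hr : r ∈ S) (hu : u ∈ S) (hv : v ∈ S) (hpq : p ≠ q) (hpr : p ≠ r) (hqr : q ≠ r)
    (hup : u ≠ p) (huq : u ≠ q) (hur : u ≠ r) (hvp : v ≠ p) (hvq : v ≠ q) (hvr : v ≠ r)
    (hzp : G.Adj z p) (hzq : G.Adj z q) (hzr : G.Adj z r) (hzu : G.Adj z u) (hzv : G.Adj z v) :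
    u = v := by
  by_contra huv
  have hsub : ({p, q, r, u, v} : Finset V) ⊆ nbrs G S z := by
    intro y
    simp only [Finset.mem_insert, Finset.mem_singleton, mem_nbrs]
    rintro (rfl | rfl | rfl | rfl | rfl) <;> exact ⟨by assumption, by assumption⟩
  have h1 := (Finset.card_le_card hsub).trans (hS.deg z hz)
  have h2 : ({p, q, r, u, v} : Finset V).card = 5 := by
    simp [*, hup.symm, huq.symm, hur.symm, hvp.symm, hvq.symm, hvr.symm]
  omega

/-- `{a, b, c, x}` spans a complete graph in `S`, `K` is the rest of `S`, and no vertex of `K` is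
adjacent to `x`. -/
structure CompleteFour (G : SimpleGraph V) (S K : Finset V) (a b c x : V) : Prop where
  mem_K : ∀ y, y ∈ K ↔ y ∈ S ∧ y ≠ a ∧ y ≠ b ∧ y ≠ c ∧ y ≠ x
  mem_a : a ∈ S
  mem_b : b ∈ S
  mem_c : c ∈ S
  mem_x : x ∈ S
  adj_ab : G.Adj a b
  adj_ac : G.Adj a c
  adj_ax : G.Adj a x
  adj_bc : G.Adj b c
  adj_bx : G.Adj b x
  adj_cx : G.Adj c x
  not_adj : ∀ y ∈ K, ¬ G.Adj x y

namespace CompleteFour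

variable {a b c x d : V}

theorem rotate (h : CompleteFour G S K a b c x) : CompleteFour G S K b c a x where
  mem_K y := by rw [h.mem_K]; tauto
  mem_a := h.mem_b
  mem_b := h.mem_c
  mem_c := h.mem_a
  mem_x := h.mem_x
  adj_ab := h.adj_bc
  adj_ac := h.adj_ab.symm
  adj_ax := h.adj_bx
  adj_bc := h.adj_ac.symm
  adj_bx := h.adj_cx
  adj_cx := h.adj_ax
  not_adj := h.not_adj

theorem eq_of_adj (h : CompleteFour G S K a b c x) (hS : Sparse G S) {u v : V} (hu : u ∈ K)
    (hv : v ∈ K) (hau : G.Adj a u) (hav : G.Adj a v) : u = v := by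
  obtain ⟨hu, -, h1, h2, h3⟩ := (h.mem_K u).1 hu
  obtain ⟨hv, -, h4, h5, h6⟩ := (h.mem_K v).1 hv
  exact hS.eq_of_adj h.mem_a h.mem_b h.mem_c h.mem_x hu hv h.adj_bc.ne h.adj_bx.ne h.adj_cx.ne
    h1 h2 h3 h4 h5 h6 h.adj_ab h.adj_ac h.adj_ax hau hav

theorem eq_of_adj' (h : CompleteFour G S K a b c x) (hS : Sparse G S) :
    ∀ z, z = a ∨ z = b ∨ z = c ∨ z = x → ∀ u ∈ K, ∀ v ∈ K, G.Adj z u → G.Adj z v → u = v := by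
  rintro z (rfl | rfl | rfl | rfl) u hu v hv
  · exact h.eq_of_adj hS hu hv
  · exact h.rotate.eq_of_adj hS hu hv
  · exact h.rotate.rotate.eq_of_adj hS hu hv
  · exact fun h' => absurd h' (h.not_adj u hu)

theorem eq_union (h : CompleteFour G S K a b c x) : S = {a, b, c, x} ∪ K := by
  ext y
  have := h.mem_K y
  have := h.mem_a
  have := h.mem_b
  have := h.mem_c
  have := h.mem_x
  simp only [Finset.mem_union, Finset.mem_insert, Finset.mem_singleton]
  grind

theorem disjoint (h : CompleteFour G S K a b c x) : Disjoint {a, b, c, x} K := by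
  rw [Finset.disjoint_left]
  intro y hy hyK
  have := (h.mem_K y).1 hyK
  simp only [Finset.mem_insert, Finset.mem_singleton] at hy
  tauto

theorem isCover (h : CompleteFour G S K a b c x) :
    IsCover G {a, b, c, x} {[a, b, c, x], [b, x, a, c], [c, a, x, b], [x, c, b, a]} :=
  isCover_complete_four h.adj_ab h.adj_ac h.adj_ax h.adj_bc h.adj_bx h.adj_cx

/-- No vertex of `K` has two neighbours among `a`, `b`, `c`. -/
theorem coverable_of_forall (h : CompleteFour G S K a b c x) (hS : Sparse G S)
    (hK : Coverable G K) (hab : ∀ d ∈ K, G.Adj a d → ¬ G.Adj b d)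
    (hbc : ∀ d ∈ K, G.Adj b d → ¬ G.Adj c d) (hac : ∀ d ∈ K, G.Adj a d → ¬ G.Adj c d) :
    Coverable G S := by
  rw [h.eq_union]
  refine Coverable.union ⟨_, h.isCover⟩ hK h.disjoint ?_ ?_
  · intro u hu
    exact h.eq_of_adj' hS u (by simpa using hu)
  · intro u hu v hv w hw huv huw
    simp only [Finset.mem_insert, Finset.mem_singleton] at hv hw
    have := hab u hu
    have := hbc u hu
    have := hac u hu
    have := h.not_adj u hu
    rw [G.adj_comm] at huv huw
    grind

/-- A vertex of `K` is adjacent to `a` and `b` but not to `c`. -/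
theorem coverable_of_two (h : CompleteFour G S K a b c x) (hS : Sparse G S) (hK : Coverable G K)
    (hd : d ∈ K) (had : G.Adj a d) (hbd : G.Adj b d) (hcd : ¬ G.Adj c d) : Coverable G S := by
  obtain ⟨M, hM⟩ := hK
  have hadj := h.eq_of_adj' hS
  have hxK := h.not_adj
  have hne := fun y hy => (h.mem_K y).1 hy
  have hab := h.adj_ab.ne
  have hac := h.adj_ac.ne
  have hax := h.adj_ax.ne
  have hbc := h.adj_bc.ne
  have hbx := h.adj_bx.ne
  have hcx := h.adj_cx.ne
  obtain ⟨f, hf, hfR, hRf⟩ := exists_involutive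
    (fun y z => y = a ∧ z = d ∨ y = d ∧ z = a ∨ G.Adj y z ∧ (y = c ∧ z ∈ K ∨ z = c ∧ y ∈ K))
    (fun u v huv => by rw [G.adj_comm]; tauto) (by
      have := fun u v => G.adj_comm u v
      grind)
  obtain ⟨g, hg, hgR, hRg⟩ := exists_involutive (fun y z => y = b ∧ z = d ∨ y = d ∧ z = b)
    (by tauto) (by grind)
  have hcK : c ∉ K := fun hc => (hne c hc).2.2.2.1 rfl
  have hdc : ¬ G.Adj d c := fun h => hcd h.symm
  rw [h.eq_union]
  refine Coverable.union_of_involutive h.isCover hM h.disjoint hf hg ?_ ?_ ?_ ?_ ?_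
  · intro v hv
    have := hfR v hv
    simp only [Finset.mem_insert, Finset.mem_singleton]
    grind
  · intro v hv
    have := hgR v hv
    simp only [Finset.mem_insert, Finset.mem_singleton]
    grind
  · intro u hu v hv
    simp only [Finset.mem_insert, Finset.mem_singleton] at hu
    have h1 := hfR u
    have h2 := hgR u
    have h3 := hRf u v
    have h4 := hRg u v
    have h5 := hne v hv
    constructor
    · rcases hu with rfl | rfl | rfl | rfl
      · exact fun hu => .inl (h3 (.inl ⟨rfl, hadj u (by simp) v hv d hd hu had⟩))
      · exact fun hu => .inr (h4 (.inl ⟨rfl, hadj u (by simp) v hv d hd hu hbd⟩))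
      · exact fun hu => .inl (h3 (.inr (.inr ⟨hu, .inl ⟨rfl, hv⟩⟩)))
      · exact fun hu => absurd hu (hxK v hv)
    · clear hf hg hfR hgR hRf hRg h3 h4
      grind
  · intro v hv hvg
    have h1 := hfR v hv
    have h2 := hgR v (hvg ▸ hv)
    rw [← hvg] at h2
    clear hf hg hfR hgR hRf hRg
    grind
  · intro p hp u v hu hv hgu hfv hgf
    have h1 := hfR v hfv
    have h2 := hgR u hgu
    rw [← hgf] at h1
    rcases Multiset.mem_add.1 hp with hp | hp
    · simp only [Multiset.insert_eq_cons, Multiset.mem_cons, Multiset.mem_singleton] at hp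
      have := hne d hd
      rcases hp with rfl | rfl | rfl | rfl <;>
        simp only [List.head?_cons, List.getLast?_cons_cons, List.getLast?_singleton,
          Option.some.injEq] at hu hv <;> subst hu hv <;> clear hf hg hfR hgR hRf hRg <;> grind
    · have h3 := hne u (hM.subset hp (List.mem_of_head? hu))
      have h4 := hne v (hM.subset hp (List.mem_of_getLast? hv))
      clear hf hg hfR hgR hRf hRg
      grind

/-- A vertex of `K` is adjacent to `a`, `b` and `c`. -/
theorem coverable_of_three (h : CompleteFour G S K a b c x) (hS : Sparse G S)
    (ih : SmallerCoverable S) (hA : NoTriangleTip G S)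
    (hd : d ∈ K) (had : G.Adj a d) (hbd : G.Adj b d) (hcd : G.Adj c d) : Coverable G S := by
  have hadj := h.eq_of_adj' hS
  have hxK := h.not_adj
  obtain ⟨hdS, hda, hdb, hdc, hdx⟩ := (h.mem_K d).1 hd
  have hsub : {x, a, b, c, d} ⊆ S := by
    intro z
    simp only [Finset.mem_insert, Finset.mem_singleton]
    rintro (rfl | rfl | rfl | rfl | rfl)
    exacts [h.mem_x, h.mem_a, h.mem_b, h.mem_c, hdS]
  have hK : ∀ y ∈ S \ {x, a, b, c, d}, y ∈ K ∧ y ∈ S ∧ y ≠ a ∧ y ≠ b ∧ y ≠ c ∧ y ≠ d := by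
    intro y hy
    have := h.mem_K y
    simp only [Finset.mem_sdiff, Finset.mem_insert, Finset.mem_singleton] at hy
    tauto
  have hcross : ∀ u ∈ ({x, a, b, c, d} : Finset V), ∀ v ∈ S \ {x, a, b, c, d}, G.Adj u v →
      u = d := by
    intro u hu v hv huv
    obtain ⟨hvK, -, -, -, -, hvd⟩ := hK v hv
    simp only [Finset.mem_insert, Finset.mem_singleton] at hu
    rcases hu with rfl | rfl | rfl | rfl | rfl
    · exact absurd huv (hxK v hvK)
    · exact absurd (hadj u (by simp) v hvK d hd huv had) hvd
    · exact absurd (hadj u (by simp) v hvK d hd huv hbd) hvd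
    · exact absurd (hadj u (by simp) v hvK d hd huv hcd) hvd
    · rfl
  have heq : ∀ u ∈ S \ {x, a, b, c, d}, ∀ v ∈ S \ {x, a, b, c, d}, G.Adj d u → G.Adj d v →
      u = v := by
    intro u hu v hv hdu hdv
    obtain ⟨-, hu, hua, hub, huc, -⟩ := hK u hu
    obtain ⟨-, hv, hva, hvb, hvc, -⟩ := hK v hv
    exact hS.eq_of_adj hdS h.mem_a h.mem_b h.mem_c hu hv h.adj_ab.ne h.adj_ac.ne h.adj_bc.ne
      hua hub huc hva hvb hvc had.symm hbd.symm hcd.symm hdu hdv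
  refine Coverable.of_sdiff hsub (coverable_complete_five_sub h.adj_ax.symm h.adj_bx.symm
    h.adj_cx.symm h.adj_ab h.adj_ac h.adj_bc had hbd hcd (hxK d hd) hdx.symm)
    (ih G _ (Finset.card_lt_card (Finset.sdiff_ssubset hsub ⟨x, by simp⟩))
      (hS.subset Finset.sdiff_subset ?_)) ?_ ?_
  · intro u v w htri
    have key : ∀ z ∈ S \ {x, a, b, c, d},
        (∃ y ∈ S, y ∉ S \ {x, a, b, c, d} ∧ G.Adj z y) → G.Adj d z := by
      rintro z hz ⟨y, hy, hyT, hzy⟩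
      have hyD : y ∈ ({x, a, b, c, d} : Finset V) :=
        by_contra fun h => hyT (Finset.mem_sdiff.2 ⟨hy, h⟩)
      exact hcross y hyD z hz hzy.symm ▸ hzy.symm
    exact htri.adj₁₂.ne (heq u htri.mem₁ v htri.mem₂
      (key u htri.mem₁ (htri.exists_adj hA Finset.sdiff_subset))
      (key v htri.mem₂ (htri.rotate.exists_adj hA Finset.sdiff_subset)))
  · intro u hu v hv w hw huv huw
    obtain rfl := hcross u hu v hv huv
    exact heq v hv w hw huv huw
  · intro u hu v hv w hw huv huw
    exact (hcross v hv u hu huv.symm).trans (hcross w hw u hu huw.symm).symm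

/-- A vertex of `K` is adjacent to `a` and `b`. -/
theorem coverable_of_shared (h : CompleteFour G S K a b c x) (hS : Sparse G S)
    (ih : SmallerCoverable S) (hA : NoTriangleTip G S) (hK : Coverable G K)
    (hd : d ∈ K) (had : G.Adj a d) (hbd : G.Adj b d) : Coverable G S := by
  by_cases hcd : G.Adj c d
  · exact h.coverable_of_three hS ih hA hd had hbd hcd
  · exact h.coverable_of_two hS hK hd had hbd hcd

end CompleteFour

theorem eq_of_ne_of_ne {a b c y₁ y₂ y₃ y : V} (h₁ : y₁ = a ∨ y₁ = b ∨ y₁ = c)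
    (h₂ : y₂ = a ∨ y₂ = b ∨ y₂ = c) (h₃ : y₃ = a ∨ y₃ = b ∨ y₃ = c) (hy : y = a ∨ y = b ∨ y = c)
    (h₁₂ : y₁ ≠ y₂) (h₁₃ : y₁ ≠ y₃) (h₂₃ : y₂ ≠ y₃) (hy₂ : y ≠ y₂) (hy₃ : y ≠ y₃) : y = y₁ := by
  grind

/-- If the neighbourhoods of all vertices of degree three are complete, then the vertices outside
a complete graph on four vertices form a sparse set. -/
theorem CompleteFour.sparse {a b c x : V} (h : CompleteFour G S K a b c x) (hS : Sparse G S)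
    (hA : NoTriangleTip G S)
    (hD : ∀ y ∈ S, ∀ a b c, a ≠ b → a ≠ c → b ≠ c → nbrs G S y = {a, b, c} → G.Adj a b) :
    Sparse G K := by
  have hKS : K ⊆ S := fun y hy => ((h.mem_K y).1 hy).1
  refine hS.subset hKS fun p q r htri => ?_
  have hadj := h.eq_of_adj' hS
  have hxK := h.not_adj
  have key : ∀ z ∈ K, (∃ y ∈ S, y ∉ K ∧ G.Adj z y) → ∃ y, (y = a ∨ y = b ∨ y = c) ∧ G.Adj z y := by
    rintro z hz ⟨y, hy, hyK, hzy⟩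
    refine ⟨y, ?_, hzy⟩
    have h1 := hxK z hz
    rw [h.mem_K] at hyK
    rw [G.adj_comm] at hzy
    grind
  obtain ⟨y₁, hy₁, hpy⟩ := key p htri.mem₁ (htri.exists_adj hA hKS)
  obtain ⟨y₂, hy₂, hqy⟩ := key q htri.mem₂ (htri.rotate.exists_adj hA hKS)
  obtain ⟨y₃, hy₃, hry⟩ := key r htri.mem₃ (htri.rotate.rotate.exists_adj hA hKS)
  have hpq := htri.adj₁₂.ne
  have hpr := htri.adj₁₃.ne
  have hqr := htri.adj₂₃.ne
  have heq : ∀ z, z = a ∨ z = b ∨ z = c → ∀ u ∈ K, ∀ v ∈ K, G.Adj u z → G.Adj v z → u = v :=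
    fun z hz u hu v hv hu' hv' => hadj z (by tauto) u hu v hv hu'.symm hv'.symm
  have h12 : y₁ ≠ y₂ := by
    rintro rfl
    exact hpq (heq _ hy₁ p htri.mem₁ q htri.mem₂ hpy hqy)
  have h13 : y₁ ≠ y₃ := by
    rintro rfl
    exact hpr (heq _ hy₁ p htri.mem₁ r htri.mem₃ hpy hry)
  have h23 : y₂ ≠ y₃ := by
    rintro rfl
    exact hqr (heq _ hy₂ q htri.mem₂ r htri.mem₃ hqy hry)
  have hy₁K : y₁ ∉ K := by
    intro hyK
    obtain ⟨-, hya, hyb, hyc, -⟩ := (h.mem_K y₁).1 hyK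
    rcases hy₁ with e | e | e
    exacts [hya e, hyb e, hyc e]
  have hy₁S : y₁ ∈ S := by
    rcases hy₁ with rfl | rfl | rfl
    exacts [h.mem_a, h.mem_b, h.mem_c]
  have hqy₁ : q ≠ y₁ := by
    rintro rfl
    exact hy₁K htri.mem₂
  have hry₁ : r ≠ y₁ := by
    rintro rfl
    exact hy₁K htri.mem₃
  have hn : nbrs G S p = {q, y₁, r} := by
    ext y
    simp only [mem_nbrs, Finset.mem_insert, Finset.mem_singleton]
    constructor
    · rintro ⟨hy, hpy'⟩
      by_cases hyK : y ∈ K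
      · rcases htri.nbr₁ y hyK hpy' with e | e
        exacts [.inl e, .inr (.inr e)]
      · have hyx : y ≠ x := by
          rintro rfl
          exact hxK p htri.mem₁ hpy'.symm
        have hyabc : y = a ∨ y = b ∨ y = c := by
          by_contra! hne
          exact hyK ((h.mem_K y).2 ⟨hy, hne.1, hne.2.1, hne.2.2, hyx⟩)
        have hyy₂ : y ≠ y₂ := by
          rintro rfl
          exact hpq (heq _ hy₂ p htri.mem₁ q htri.mem₂ hpy' hqy)
        have hyy₃ : y ≠ y₃ := by
          rintro rfl
          exact hpr (heq _ hy₃ p htri.mem₁ r htri.mem₃ hpy' hry)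
        exact .inr (.inl (eq_of_ne_of_ne hy₁ hy₂ hy₃ hyabc h12 h13 h23 hyy₂ hyy₃))
    · rintro (rfl | rfl | rfl)
      exacts [⟨hKS htri.mem₂, htri.adj₁₂⟩, ⟨hy₁S, hpy⟩, ⟨hKS htri.mem₃, htri.adj₁₃⟩]
  have hqy₁' := hD p (hKS htri.mem₁) q y₁ r hqy₁ hqr hry₁.symm hn
  exact hpq (heq _ hy₁ p htri.mem₁ q htri.mem₂ hpy hqy₁')

/-- In a graph of minimum degree at least three, a vertex of degree three, when the neighbourhoods
of all vertices of degree three are complete. -/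
theorem SmallerCoverable.of_complete (ih : SmallerCoverable S) (hS : Sparse G S)
    (hA : NoTriangleTip G S) {x a b c : V} (hx : x ∈ S) (hab : a ≠ b)
    (hac : a ≠ c) (hbc : b ≠ c) (hn : nbrs G S x = {a, b, c})
    (hD : ∀ y ∈ S, ∀ a b c, a ≠ b → a ≠ c → b ≠ c → nbrs G S y = {a, b, c} → G.Adj a b) :
    Coverable G S := by
  have hxn : ∀ y, y ∈ S ∧ G.Adj x y ↔ y = a ∨ y = b ∨ y = c := by
    intro y; rw [← mem_nbrs, hn]; simp
  obtain ⟨ha, hxa⟩ := (hxn a).2 (.inl rfl)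
  obtain ⟨hb, hxb⟩ := (hxn b).2 (.inr (.inl rfl))
  obtain ⟨hc, hxc⟩ := (hxn c).2 (.inr (.inr rfl))
  have hperm : ∀ p q r, ({a, b, c} : Finset V) = {p, q, r} → p ≠ q → p ≠ r → q ≠ r →
      G.Adj p q := fun p q r h hpq hpr hqr => hD x hx p q r hpq hpr hqr (hn.trans h)
  have h : CompleteFour G S (S \ {a, b, c, x}) a b c x := by
    refine ⟨fun y => by simp, ha, hb, hc, hx, ?_, ?_, hxa.symm, ?_, hxb.symm, hxc.symm, ?_⟩
    · exact hperm a b c rfl hab hac hbc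
    · exact hperm a c b (by grind) hac hab hbc.symm
    · exact hperm b c a (by grind) hbc hab.symm hac.symm
    · intro y hy hxy
      simp only [Finset.mem_sdiff, Finset.mem_insert, Finset.mem_singleton] at hy
      have := (hxn y).1 ⟨hy.1, hxy⟩
      tauto
  have hK : Coverable G (S \ {a, b, c, x}) := by
    refine ih G _ (Finset.card_lt_card ⟨Finset.sdiff_subset, fun h' => ?_⟩) (h.sparse hS hA hD)
    simpa using h' hx
  by_cases h1 : ∃ d ∈ S \ {a, b, c, x}, G.Adj a d ∧ G.Adj b d
  · obtain ⟨d, hd, had, hbd⟩ := h1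
    exact h.coverable_of_shared hS ih hA hK hd had hbd
  by_cases h2 : ∃ d ∈ S \ {a, b, c, x}, G.Adj b d ∧ G.Adj c d
  · obtain ⟨d, hd, hbd, hcd⟩ := h2
    exact h.rotate.coverable_of_shared hS ih hA hK hd hbd hcd
  by_cases h3 : ∃ d ∈ S \ {a, b, c, x}, G.Adj a d ∧ G.Adj c d
  · obtain ⟨d, hd, had, hcd⟩ := h3
    exact h.rotate.rotate.coverable_of_shared hS ih hA hK hd hcd had
  push Not at h1 h2 h3
  exact h.coverable_of_forall hS hK h1 h2 h3

theorem Sparse.coverable (hS : Sparse G S) : Coverable G S := by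
  induction hk : S.card using Nat.strong_induction_on generalizing G S with
  | _ k ih =>
    subst hk
    have ih : SmallerCoverable S := fun G T hT hTS => ih _ hT hTS rfl
    rcases S.eq_empty_or_nonempty with rfl | hne
    · exact ⟨0, by simp, by simp, by simp, by simp [arcsOn_empty]⟩
    by_cases hA : NoTriangleTip G S
    swap
    · simp only [NoTriangleTip, not_forall, not_not] at hA
      obtain ⟨q, hq, p, r, hn, hpr⟩ := hA
      exact ih.of_triangle hS hq hn hpr
    by_cases hmin : ∀ v ∈ S, 3 ≤ (nbrs G S v).card
    swap
    · push Not at hmin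
      obtain ⟨x, hx, hlt⟩ := hmin
      by_cases h1 : (nbrs G S x).card ≤ 1
      · exact ih.of_leaf hS hA hx h1
      · obtain ⟨a, b, hab, hn⟩ := Finset.card_eq_two.1 (show (nbrs G S x).card = 2 by omega)
        exact ih.of_degree_two hS hA hx hab hn
    by_cases hD : ∀ y ∈ S, ∀ a b c, a ≠ b → a ≠ c → b ≠ c → nbrs G S y = {a, b, c} → G.Adj a b
    · obtain ⟨x, hx, hle⟩ := hS.exists_le S subset_rfl hne
      obtain ⟨a, b, c, hab, hac, hbc, hn⟩ := Finset.card_eq_three.1 (hle.antisymm (hmin x hx))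
      exact ih.of_complete hS hA hx hab hac hbc hn hD
    · push Not at hD
      obtain ⟨x, hx, a, b, c, hab, hac, hbc, hn, hG⟩ := hD
      exact ih.of_degree_three hS hmin hx hab hac hbc hn hG

/-- Gluing two covers at a cut vertex. -/
theorem Coverable.glue (h₁ : Coverable G S₁) (h₂ : Coverable G S₂) {v : V}
    (hv : S₁ ∩ S₂ = {v}) (h : ∀ a ∈ S₁, ∀ b ∈ S₂, G.Adj a b → a = v ∨ b = v) :
    Coverable G (S₁ ∪ S₂) := by
  obtain ⟨M₁, h₁⟩ := h₁
  obtain ⟨M₂, h₂⟩ := h₂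
  have hmem : ∀ x, x ∈ S₁ ∧ x ∈ S₂ ↔ x = v := fun x => by
    rw [← Finset.mem_inter, hv, Finset.mem_singleton]
  obtain ⟨hv₁, hv₂⟩ := (hmem v).2 rfl
  have hval : (S₁ ∪ S₂).val + {v} = S₁.val + S₂.val := by
    rw [← Multiset.union_add_inter S₁.val, ← Finset.inter_val, hv, ← Finset.union_val]
    rfl
  have harcs : (arcsOn G (S₁ ∪ S₂)).val = (arcsOn G S₁).val + (arcsOn G S₂).val := by
    refine ((arcsOn G (S₁ ∪ S₂)).nodup.ext ?_).2 ?_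
    · refine Multiset.nodup_add.2 ⟨(arcsOn G S₁).nodup, (arcsOn G S₂).nodup, ?_⟩
      rw [Multiset.disjoint_left]
      rintro ⟨a, b⟩ ha hb
      simp only [Finset.mem_val, mem_arcsOn] at ha hb
      exact ha.2.2.ne
        (((hmem a).1 ⟨ha.1, hb.1⟩).trans ((hmem b).1 ⟨ha.2.1, hb.2.1⟩).symm)
    · rintro ⟨a, b⟩
      simp only [Multiset.mem_add, Finset.mem_val, mem_arcsOn, Finset.mem_union]
      have h' := h b
      have := G.adj_comm a b
      grind
  obtain ⟨Q, hQ, hQv⟩ := h₁.exists_last hv₁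
  obtain ⟨P, hP, hPv⟩ := h₂.exists_head hv₂
  obtain ⟨l, rfl⟩ := List.getLast?_eq_some_iff.1 hQv
  obtain ⟨l', rfl⟩ := List.head?_eq_some_iff.1 hPv
  have hlS : ∀ x ∈ l, x ∈ S₁ := fun x hx => h₁.subset hQ (by simp [hx])
  have hlS' : ∀ x ∈ l', x ∈ S₂ := fun x hx => h₂.subset hP (by simp [hx])
  obtain ⟨N₁, rfl⟩ := Multiset.exists_cons_of_mem hQ
  obtain ⟨N₂, rfl⟩ := Multiset.exists_cons_of_mem hP
  refine ⟨(l ++ v :: l') ::ₘ (N₁ + N₂), ?_, ?_, ?_, ?_⟩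
  · intro p hp
    rcases Multiset.mem_cons.1 hp with rfl | hp
    · have := h₁.nodup _ hQ
      have := h₂.nodup _ hP
      grind
    · rcases Multiset.mem_add.1 hp with hp | hp
      exacts [h₁.nodup p (Multiset.mem_cons_of_mem hp), h₂.nodup p (Multiset.mem_cons_of_mem hp)]
  · have e₁ := h₁.head
    have e₂ := h₂.head
    have e := congrArg (Multiset.map some) hval
    rw [Multiset.map_add, Multiset.map_add, ← e₁, ← e₂] at e
    refine add_right_cancel (b := {some v}) (Eq.trans ?_ e.symm)
    cases l <;> simp [← Multiset.singleton_add] <;> abel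
  · have e₁ := h₁.last
    have e₂ := h₂.last
    have e := congrArg (Multiset.map some) hval
    rw [Multiset.map_add, Multiset.map_add, ← e₁, ← e₂] at e
    refine add_right_cancel (b := {some v}) (Eq.trans ?_ e.symm)
    simp [← Multiset.singleton_add, List.getLast?_cons]
    abel
  · rw [harcs, ← h₁.arcs, ← h₂.arcs]
    simp only [Multiset.cons_bind, Multiset.add_bind, arcs_append l l' v]
    abel

theorem IsCover.eq_of_arc {M : Multiset (List V)} (h : IsCover G S M) {p q : List V}
    (hp : p ∈ M) (hq : q ∈ M) {e : V × V} (hep : e ∈ PathCover.arcs p)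
    (heq : e ∈ PathCover.arcs q) : p = q := by
  by_contra hne
  obtain ⟨N, rfl⟩ := Multiset.exists_eq_cons_cons hp hq hne
  have hn : ((p ::ₘ q ::ₘ N).bind PathCover.arcs).Nodup := h.arcs ▸ (arcsOn G S).nodup
  rw [Multiset.cons_bind, Multiset.cons_bind, Multiset.nodup_add] at hn
  exact Multiset.disjoint_left.1 hn.2.2 hep (Multiset.mem_add.2 (.inl heq))

theorem IsCover.isChain {M : Multiset (List V)} (h : IsCover G S M) {p : List V} (hp : p ∈ M) :
    p.IsChain G.Adj := by
  rw [List.isChain_iff_forall_rel_of_append_cons_cons]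
  intro a b l₁ l₂ hl
  have : (a, b) ∈ M.bind PathCover.arcs :=
    Multiset.mem_bind.2 ⟨p, hp, mem_arcs_iff.2 ⟨l₁, l₂, hl⟩⟩
  rw [h.arcs] at this
  exact (mem_arcsOn.1 this).2.2

theorem Coverable.hasOPPDC [Fintype V] (h : Coverable G Finset.univ) : HasOPPDC G := by
  obtain ⟨M, h⟩ := h
  choose P hP hhead using fun v => h.exists_head (Finset.mem_univ v)
  have hinj : ∀ v w, P v = P w → v = w := fun v w hvw =>
    Option.some_injective _ (by rw [← hhead v, ← hhead w, hvw])
  have hex : ∀ p ∈ M, ∃ v, P v = p := by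
    intro p hp
    obtain ⟨v, l, rfl⟩ := List.exists_cons_of_ne_nil (h.ne_nil hp)
    exact ⟨v, h.eq_of_head (hP v) hp (hhead v)⟩
  refine ⟨P, fun v => ⟨h.ne_nil (hP v), h.nodup _ (hP v), h.isChain (hP v), hhead v⟩, ?_, ?_⟩
  · intro w
    obtain ⟨p, hp, hpw⟩ := h.exists_last (Finset.mem_univ w)
    obtain ⟨v, rfl⟩ := hex p hp
    exact ⟨v, hpw, fun u hu => hinj _ _ (h.eq_of_last (hP u) hp (hu.trans hpw.symm))⟩
  · intro a b hab
    obtain ⟨p, hp, hpe⟩ := h.exists_arc (Finset.mem_univ a) (Finset.mem_univ b) hab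
    obtain ⟨v, rfl⟩ := hex p hp
    exact ⟨v, hpe, fun u hu => hinj _ _ (h.eq_of_arc (hP u) hp hu hpe)⟩

/-- A proper vertex set of a connected 4-regular graph that is closed under adjacency except at
one vertex `v` is sparse. -/
theorem sparse_of_regular [Fintype V] [DecidableRel G.Adj] (hconn : G.Connected)
    (hreg : ∀ v, G.degree v = 4) {v : V} (hS : S ≠ Finset.univ)
    (hcl : ∀ a ∈ S, a ≠ v → ∀ b, G.Adj a b → b ∈ S) : Sparse G S := by
  have hdeg : ∀ T : Finset V, ∀ u, (nbrs G T u).card ≤ 4 := fun T u => by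
    rw [← hreg u, ← G.card_neighborFinset_eq_degree]
    exact Finset.card_le_card fun w hw => (G.mem_neighborFinset u w).2 (mem_nbrs.1 hw).2
  have hmem : ∀ T : Finset V, ∀ u, 4 ≤ (nbrs G T u).card → ∀ w, G.Adj u w → w ∈ T := by
    intro T u hu w hw
    have hsub : nbrs G T u ⊆ G.neighborFinset u :=
      fun w hw => (G.mem_neighborFinset u w).2 (mem_nbrs.1 hw).2
    have heq := Finset.eq_of_subset_of_card_le hsub
      (by rw [G.card_neighborFinset_eq_degree, hreg]; exact hu)
    exact (mem_nbrs.1 (heq ▸ (G.mem_neighborFinset u w).2 hw)).1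
  refine ⟨fun u _ => hdeg S u, ?_, ?_⟩
  · intro T hTS ⟨t, ht⟩
    by_contra! hT
    refine hS (Finset.eq_univ_iff_forall.2 fun x => hTS ?_)
    obtain ⟨p⟩ := hconn.preconnected t x
    induction p with
    | nil => exact ht
    | cons hadj p ih => exact ih (hmem T _ (hT _ ht) _ hadj)
  · intro a b c h
    have key : ∀ a b c, IsolatedTriangle G S a b c → a = v := by
      intro a b c h
      by_contra hav
      have hsub : G.neighborFinset a ⊆ {b, c} := fun y hy => by
        rw [G.mem_neighborFinset] at hy
        simpa using h.nbr₁ y (hcl a h.mem₁ hav y hy) hy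
      have := (Finset.card_le_card hsub).trans Finset.card_le_two
      rw [G.card_neighborFinset_eq_degree, hreg] at this
      omega
    exact h.adj₁₂.ne ((key _ _ _ h).trans (key _ _ _ h.rotate).symm)

/-- The two sides of a cut vertex. -/
theorem exists_separation {v : V} (hne : ∃ w, w ≠ v)
    (h : ¬ (G.induce {w : V | w ≠ v}).Connected) :
    ∃ A : Set V, v ∉ A ∧ (∃ a, a ∈ A) ∧ (∃ b, b ∉ A ∧ b ≠ v) ∧
      ∀ a ∈ A, ∀ b, b ≠ v → G.Adj a b → b ∈ A := by
  obtain ⟨w, hw⟩ := hne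
  have hpre : ¬ (G.induce {w : V | w ≠ v}).Preconnected :=
    fun hp => h ((SimpleGraph.connected_iff _).2 ⟨hp, ⟨⟨w, hw⟩⟩⟩)
  simp only [SimpleGraph.Preconnected, not_forall] at hpre
  obtain ⟨a, b, hab⟩ := hpre
  refine ⟨{x | ∃ hx : x ≠ v, (G.induce {w : V | w ≠ v}).Reachable a ⟨x, hx⟩},
    fun ⟨hv, _⟩ => hv rfl, ⟨a, a.2, .refl _⟩, ⟨b, fun ⟨_, hb⟩ => hab hb, b.2⟩, ?_⟩
  rintro x ⟨hx, hax⟩ y hy hxy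
  exact ⟨hy, hax.trans (SimpleGraph.Adj.reachable (by simpa using hxy))⟩

end

end PathCover

/-- every 4-regular graph with a cut vertex has an OPPDC. -/
theorem four_regular_cut_vertex_hasOPPDC {V : Type*} [Fintype V]
    (G : SimpleGraph V) [DecidableRel G.Adj]
    (hconn : G.Connected)
    (hreg : ∀ v : V, G.degree v = 4)
    (hcut : ∃ v : V, ¬ (G.induce {w : V | w ≠ v}).Connected) :
    HasOPPDC G := by
  classical
  obtain ⟨v, hv⟩ := hcut
  obtain ⟨w, hw⟩ : ∃ w, G.Adj v w := (G.degree_pos_iff_exists_adj v).1 (by simp [hreg v])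
  obtain ⟨A, hvA, ⟨a, ha⟩, ⟨b, hb, hbv⟩, hA⟩ := PathCover.exists_separation ⟨w, hw.ne'⟩ hv
  have h₁ : PathCover.Sparse G (Finset.univ.filter fun x => x = v ∨ x ∈ A) := by
    refine PathCover.sparse_of_regular hconn hreg (v := v) (fun h => ?_) ?_
    · simpa [hb, hbv] using Finset.eq_univ_iff_forall.1 h b
    · intro x hx hxv y hxy
      simp only [Finset.mem_filter, Finset.mem_univ, true_and] at hx ⊢
      exact or_iff_not_imp_left.2 fun hy => hA x (hx.resolve_left hxv) y hy hxy
  have h₂ : PathCover.Sparse G (Finset.univ.filter fun x => x ∉ A) := by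
    refine PathCover.sparse_of_regular hconn hreg (v := v) (fun h => ?_) ?_
    · simpa [ha] using Finset.eq_univ_iff_forall.1 h a
    · intro x hx hxv y hxy
      simp only [Finset.mem_filter, Finset.mem_univ, true_and] at hx ⊢
      exact fun hy => hx (hA y hy x hxv hxy.symm)
  have hcov := h₁.coverable.glue h₂.coverable (v := v) (by ext x; simp; grind) (by
    intro x hx y hy hxy
    simp only [Finset.mem_filter, Finset.mem_univ, true_and] at hx hy
    grind)
  refine PathCover.Coverable.hasOPPDC ?_
  convert hcov using 1
  ext x
  simp
  tauto
end

section
/- For all positive integers n and m, the complete bipartite graph K_{n,m} has an oriented perfect path double cover. -/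
/-- An isomorphism of graphs transports oriented perfect path double covers. -/
theorem HasOPPDC.of_iso {V W : Type*} {G : SimpleGraph V} {H : SimpleGraph W} (e : G ≃g H)
    (h : HasOPPDC G) : HasOPPDC H := by
  obtain ⟨P, hP, hend, harc⟩ := h
  refine ⟨fun w => (P (e.symm w)).map e, fun w => ?_, fun w => ?_, fun a b hab => ?_⟩
  · obtain ⟨h1, h2, h3, h4⟩ := hP (e.symm w)
    refine ⟨by simpa using h1, h2.map e.injective, ?_, by simp [h4]⟩
    exact (List.isChain_map e).2 (h3.imp fun a b => e.map_adj_iff.2)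
  · obtain ⟨v, hv, huniq⟩ := hend (e.symm w)
    refine ⟨e v, by simp [hv], fun y hy => ?_⟩
    rw [← huniq (e.symm y), e.apply_symm_apply]
    dsimp only at hy
    rw [List.getLast?_map, Option.map_eq_some_iff] at hy
    obtain ⟨x, hx, rfl⟩ := hy
    simpa using hx
  · have key : ∀ w, (a, b) ∈ ((P (e.symm w)).map e).zip ((P (e.symm w)).map e).tail ↔
        (e.symm a, e.symm b) ∈ (P (e.symm w)).zip (P (e.symm w)).tail := fun w => by
      rw [← List.map_tail, List.zip_map, List.mem_map]
      constructor
      · rintro ⟨⟨x, y⟩, hxy, heq⟩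
        obtain ⟨rfl, rfl⟩ := Prod.mk.inj heq
        simpa using hxy
      · exact fun hm => ⟨_, hm, by simp⟩
    obtain ⟨v, hv, huniq⟩ := harc _ _ (e.symm.map_adj_iff.2 hab)
    refine ⟨e v, (key _).2 (by simpa using hv), fun y hy => ?_⟩
    rw [← huniq _ ((key y).1 hy), e.apply_symm_apply]

theorem mem_zip_tail_map_range' {V : Type*} (u : ℕ → V) (lo k : ℕ) (a b : V) :
    (a, b) ∈ ((List.range' lo (k + 1)).map u).zip ((List.range' lo (k + 1)).map u).tail ↔
      ∃ p, lo ≤ p ∧ p < lo + k ∧ u p = a ∧ u (p + 1) = b := by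
  induction k generalizing lo with
  | zero => simp; omega
  | succ k ih =>
    have ih := ih (lo + 1)
    rw [List.range'_succ, List.map_cons, List.tail_cons]
    rw [List.range'_succ, List.map_cons, List.tail_cons] at ih
    rw [List.range'_succ, List.map_cons, List.zip_cons_cons, List.mem_cons, ih, Prod.mk.injEq]
    constructor
    · rintro (⟨rfl, rfl⟩ | ⟨p, h1, h2, h3⟩)
      · exact ⟨lo, le_rfl, by omega, rfl, rfl⟩
      · exact ⟨p, by omega, by omega, h3⟩
    · rintro ⟨p, h1, h2, rfl, rfl⟩
      rcases h1.eq_or_lt with rfl | h1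
      · exact Or.inl ⟨rfl, rfl⟩
      · exact Or.inr ⟨p, h1, by omega, rfl, rfl⟩

/-- An oriented perfect path double cover whose paths are segments of prescribed vertex
sequences. -/
theorem HasOPPDC.of_segments {V : Type*} {G : SimpleGraph V} (u : V → ℕ → V) (lo hi : V → ℕ)
    (hle : ∀ v, lo v ≤ hi v) (hstart : ∀ v, u v (lo v) = v)
    (hinj : ∀ v, Set.InjOn (u v) (Set.Icc (lo v) (hi v)))
    (hadj : ∀ v p, lo v ≤ p → p < hi v → G.Adj (u v p) (u v (p + 1)))
    (hend : Function.Bijective fun v => u v (hi v))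
    (harc : ∀ a b, G.Adj a b → ∃! v, ∃ p, lo v ≤ p ∧ p < hi v ∧ u v p = a ∧ u v (p + 1) = b) :
    HasOPPDC G := by
  refine ⟨fun v => (List.range' (lo v) (hi v - lo v + 1)).map (u v), fun v => ⟨by simp, ?_, ?_, ?_⟩,
    fun w => ?_, fun a b hab => ?_⟩
  · refine List.Nodup.map_on (fun x hx y hy => ?_) List.nodup_range'
    have := hle v
    rw [List.mem_range'_1] at hx hy
    exact fun h => hinj v ⟨hx.1, by omega⟩ ⟨hy.1, by omega⟩ h
  · refine List.isChain_iff_getElem.2 fun i hi' => ?_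
    simp only [List.length_map, List.length_range'] at hi'
    simp only [List.getElem_map, List.getElem_range', one_mul]
    exact hadj v (lo v + i) (by omega) (by omega)
  · simp [List.range'_succ, hstart]
  · have key : ∀ v, ((List.range' (lo v) (hi v - lo v + 1)).map (u v)).getLast? = some w ↔
        u v (hi v) = w := fun v => by
      simp [List.range'_1_concat, Nat.add_sub_cancel' (hle v)]
    simpa only [key] using hend.existsUnique w
  · have key : ∀ v, lo v + (hi v - lo v) = hi v := fun v => Nat.add_sub_cancel' (hle v)
    simpa only [mem_zip_tail_map_range', key] using harc a b hab

namespace BipartiteZigzag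

variable {n m : ℕ}

/-- The zigzag `s + 1, 0, s, 1, s - 1, …, n - 1, s + 1 - n` in which even positions lie in
`ZMod m` and odd positions in `Fin n`. -/
def vertex (s : ZMod m) (p : ℕ) : Fin n ⊕ ZMod m :=
  if h : p % 2 = 1 ∧ p / 2 < n then .inl ⟨p / 2, h.2⟩ else .inr (s + 1 - (p / 2 : ℕ))

/-- The zigzag containing the path that starts at the given vertex. -/
def line : Fin n ⊕ ZMod m → ZMod m
  | .inl i => (i : ℕ)
  | .inr b => b - 1

/-- The position on its zigzag at which the path from the given vertex starts. -/
def lo : Fin n ⊕ ZMod m → ℕ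
  | .inl i => 2 * i + 1
  | .inr _ => 0

/-- The position on its zigzag at which the path from the given vertex ends. -/
def hi : Fin n ⊕ ZMod m → ℕ
  | .inl _ => 2 * n
  | .inr b => if (b - 1).val < n then 2 * (b - 1).val + 1 else 2 * n

theorem vertex_odd (s : ZMod m) (i : Fin n) : vertex s (2 * i + 1) = .inl i := by
  have h : (2 * (i : ℕ) + 1) / 2 = i := by omega
  simp [vertex, h, Nat.add_mod]

theorem vertex_even (s : ZMod m) (i : ℕ) :
    vertex s (2 * i) = (.inr (s + 1 - i) : Fin n ⊕ ZMod m) := by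
  simp [vertex]

theorem lo_le_hi (v : Fin n ⊕ ZMod m) : lo v ≤ hi v := by
  rcases v with i | b <;> simp only [lo, hi] <;> omega

theorem hi_le (v : Fin n ⊕ ZMod m) : hi v ≤ 2 * n := by
  rcases v with i | b <;> simp only [hi]
  · rfl
  · split_ifs <;> omega

theorem vertex_line_lo (v : Fin n ⊕ ZMod m) : vertex (line v) (lo v) = v := by
  rcases v with i | b
  · exact vertex_odd _ i
  · simp [lo, line, vertex]

theorem adj_vertex (s : ZMod m) {p : ℕ} (hp : p < 2 * n) :
    (completeBipartiteGraph (Fin n) (ZMod m)).Adj (vertex s p) (vertex s (p + 1)) := by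
  obtain ⟨i, rfl | rfl⟩ := Nat.even_or_odd' p
  · rw [vertex_even, vertex_odd s ⟨i, by omega⟩]; simp
  · rw [vertex_odd s ⟨i, by omega⟩, show 2 * i + 1 + 1 = 2 * (i + 1) by ring, vertex_even]; simp

/-- On a stretch of a zigzag spanning fewer than `m + 1` vertices of `ZMod m`, no vertex is
repeated. -/
theorem injOn_vertex (s : ZMod m) {l h : ℕ} (hn : h ≤ 2 * n) (hlt : h / 2 < m + (l + 1) / 2) :
    Set.InjOn (vertex s : ℕ → Fin n ⊕ ZMod m) (Set.Icc l h) := by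
  rintro p ⟨hp, hp'⟩ q ⟨hq, hq'⟩ hpq
  obtain ⟨i, rfl | rfl⟩ := Nat.even_or_odd' p <;> obtain ⟨j, rfl | rfl⟩ := Nat.even_or_odd' q
  · rw [vertex_even, vertex_even, Sum.inr.injEq, sub_right_inj, ZMod.natCast_eq_natCast_iff] at hpq
    rw [hpq.eq_of_abs_lt (by rw [abs_lt]; omega)]
  · rw [vertex_even, vertex_odd s ⟨j, by omega⟩] at hpq
    simp at hpq
  · rw [vertex_even, vertex_odd s ⟨i, by omega⟩] at hpq
    simp at hpq
  · rw [vertex_odd s ⟨i, by omega⟩, vertex_odd s ⟨j, by omega⟩] at hpq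
    simpa using hpq

theorem val_natCast_of_lt {i : ℕ} (hnm : n ≤ m) (hi : i < n) : (i : ZMod m).val = i :=
  ZMod.val_natCast_of_lt (hi.trans_le hnm)

/-- Each arc is a step of exactly one zigzag, at exactly one position. -/
theorem exists_step {a b : Fin n ⊕ ZMod m}
    (hab : (completeBipartiteGraph (Fin n) (ZMod m)).Adj a b) :
    ∃ (s : ZMod m) (p : ℕ), p < 2 * n ∧ ∀ (t : ZMod m) (q : ℕ), q < 2 * n →
      ((vertex t q = a ∧ vertex t (q + 1) = b) ↔ t = s ∧ q = p) := by
  rcases a with i | j <;> rcases b with i' | j' <;> simp at hab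
  · refine ⟨j' + (i : ℕ), 2 * i + 1, by omega, fun t q hq => ?_⟩
    obtain ⟨k, rfl | rfl⟩ := Nat.even_or_odd' q
    · simp only [vertex_even, reduceCtorEq, false_and, false_iff]
      omega
    · rw [vertex_odd t ⟨k, by omega⟩, show 2 * k + 1 + 1 = 2 * (k + 1) by ring, vertex_even]
      simp only [Sum.inl.injEq, Sum.inr.injEq, Fin.ext_iff]
      constructor
      · rintro ⟨rfl, rfl⟩
        exact ⟨by push_cast; ring, rfl⟩
      · rintro ⟨rfl, h⟩
        obtain rfl : k = i := by omega
        exact ⟨rfl, by push_cast; ring⟩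
  · refine ⟨j + (i' : ℕ) - 1, 2 * i', by omega, fun t q hq => ?_⟩
    obtain ⟨k, rfl | rfl⟩ := Nat.even_or_odd' q
    · rw [vertex_odd t ⟨k, by omega⟩, vertex_even]
      simp only [Sum.inl.injEq, Sum.inr.injEq, Fin.ext_iff]
      constructor
      · rintro ⟨rfl, rfl⟩
        exact ⟨by ring, rfl⟩
      · rintro ⟨rfl, h⟩
        obtain rfl : k = i' := by omega
        exact ⟨by ring, rfl⟩
    · rw [vertex_odd t ⟨k, by omega⟩]
      simp only [reduceCtorEq, false_and, false_iff]
      omega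

variable [NeZero m]

theorem injOn_path (hnm : n ≤ m) (v : Fin n ⊕ ZMod m) :
    Set.InjOn (vertex (line v) : ℕ → Fin n ⊕ ZMod m) (Set.Icc (lo v) (hi v)) := by
  refine injOn_vertex _ (hi_le v) ?_
  have hm := NeZero.pos m
  rcases v with i | b
  · simp only [lo, hi]; omega
  · have := ZMod.val_lt (b - 1)
    simp only [lo, hi]; split_ifs <;> omega

theorem bijective_end (hnm : n ≤ m) :
    Function.Bijective fun v : Fin n ⊕ ZMod m => (vertex (line v) (hi v) : Fin n ⊕ ZMod m) := by
  refine Function.Surjective.bijective_of_finite ?_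
  rintro (i | c)
  · refine ⟨.inr ((i : ℕ) + 1), ?_⟩
    simp [hi, line, val_natCast_of_lt hnm i.2, vertex_odd]
  · by_cases h : (c + n - 1).val < n
    · refine ⟨.inl ⟨_, h⟩, ?_⟩
      simp [hi, line, vertex_even]
    · refine ⟨.inr (c + n), ?_⟩
      simp [hi, line, h, vertex_even]

/-- Each step of each zigzag belongs to exactly one path. -/
theorem existsUnique_path (hnm : n ≤ m) (s : ZMod m) {p : ℕ} (hp : p < 2 * n) :
    ∃! v : Fin n ⊕ ZMod m, line v = s ∧ lo v ≤ p ∧ p < hi v := by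
  by_cases h : s.val < n ∧ 2 * s.val + 1 ≤ p
  · refine ⟨.inl ⟨s.val, h.1⟩, ⟨by simp [line], h.2, hp⟩, ?_⟩
    rintro (i | b) ⟨rfl, h1, h2⟩
    · simp [line, val_natCast_of_lt hnm i.2]
    · simp only [line, hi] at h h2
      rw [if_pos h.1] at h2
      omega
  · refine ⟨.inr (s + 1), ⟨by simp [line], by simp [lo], ?_⟩, ?_⟩
    · simp only [hi, add_sub_cancel_right]; split_ifs <;> omega
    · rintro (i | b) ⟨rfl, h1, h2⟩
      · simp only [line, val_natCast_of_lt hnm i.2] at h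
        exact absurd ⟨i.2, h1⟩ h
      · simp [line]

theorem hasOPPDC (hnm : n ≤ m) : HasOPPDC (completeBipartiteGraph (Fin n) (ZMod m)) := by
  refine .of_segments (fun v => vertex (line v)) lo hi lo_le_hi vertex_line_lo (injOn_path hnm)
    (fun v p _ hp => adj_vertex _ (hp.trans_le (hi_le v))) (bijective_end hnm) fun a b hab => ?_
  obtain ⟨s, p, hp, hstep⟩ := exists_step hab
  refine (existsUnique_congr fun v => ?_).1 (existsUnique_path hnm s hp)
  constructor
  · rintro ⟨hs, h1, h2⟩
    exact ⟨p, h1, h2, (hstep _ p hp).2 ⟨hs, rfl⟩⟩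
  · rintro ⟨q, h1, h2, h3⟩
    obtain ⟨hs, rfl⟩ := (hstep _ q (h2.trans_le (hi_le v))).1 h3
    exact ⟨hs, h1, h2⟩

end BipartiteZigzag

/-- Every complete bipartite graph whose first part is the smaller one has an OPPDC. -/
theorem completeBipartite_hasOPPDC_of_le {n m : ℕ} (hm : 1 ≤ m) (hnm : n ≤ m) :
    HasOPPDC (completeBipartiteGraph (Fin n) (Fin m)) := by
  have : NeZero m := ⟨by omega⟩
  refine .of_iso ⟨Equiv.sumCongr (.refl _) (ZMod.finEquiv m).symm.toEquiv, ?_⟩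
    (BipartiteZigzag.hasOPPDC hnm)
  rintro (a | a) (b | b) <;> simp

/-- every complete bipartite graph `K_{n,m}` (n, m ≥ 1) has an
OPPDC. -/
theorem completeBipartite_hasOPPDC (n m : ℕ) (hn : 1 ≤ n) (hm : 1 ≤ m) :
    HasOPPDC (completeBipartiteGraph (Fin n) (Fin m)) := by
  rcases le_total n m with h | h
  · exact completeBipartite_hasOPPDC_of_le hm h
  · refine .of_iso ⟨Equiv.sumComm _ _, ?_⟩ (completeBipartite_hasOPPDC_of_le hn h)
    rintro (a | a) (b | b) <;> simp
end
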